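/- arXiv:1009.3777 — 2 statements merged into one kernel-verified Lean document; each statement's English description precedes it below -/
import Mathlib

section
/- Let F be a field of characteristic zero, V a finite-dimensional F-vector space, and M an automorphism of V with Jordan–Chevalley decomposition M = M_s + M_n. Let W be the weight filtration on V centered at w ∈ ℤ associated to M_n, and fix an integer j > 0. If ∧^j M = T + P is a Jordan–Chevalley decomposition of the automorphism ∧^j M of ∧^j V (T semisimple, P nilpotent, T ∘ P = P ∘ T), then the weight filtration on ∧^j V centered at w·j associated to P is the exterior power filtration ∧^j W, defined by (∧^j W)_i = Σ_{i₁+⋯+i_j=i} W_{i₁} ∧ ⋯ ∧ W_{i_j} (the span of wedges v₁ ∧ ⋯ ∧ v_j with v_k ∈ W_{i_k}). -/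
/-- `W` is an ascending filtration on `V`, exhaustive and separated, which is the weight
filtration centered at `w` associated to the nilpotent endomorphism `N`. -/
def IsWeightFiltration {F V : Type*} [Field F] [AddCommGroup V] [Module F V]
    (N : V →ₗ[F] V) (w : ℤ) (W : ℤ → Submodule F V) : Prop :=
  Monotone W ∧
  (∃ a : ℤ, ∀ i ≤ a, W i = ⊥) ∧
  (∃ b : ℤ, ∀ i, b ≤ i → W i = ⊤) ∧
  (∀ i : ℤ, (W i).map N ≤ W (i - 2)) ∧
  (∀ α : ℤ, 0 < α →
    W (w - α) ≤ W (w - α - 1) ⊔ (W (w + α)).map (N ^ α.toNat) ∧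
    ∀ v ∈ W (w + α), (N ^ α.toNat) v ∈ W (w - α - 1) → v ∈ W (w + α - 1))

/-- The wedge `v₁ ∧ ⋯ ∧ v_j`, as an element of the `j`-th exterior power `⋀[F]^j V`. -/
def wedge (F : Type*) {V : Type*} [Field F] [AddCommGroup V] [Module F V] (j : ℕ)
    (v : Fin j → V) : ⋀[F]^j V :=
  ⟨ExteriorAlgebra.ιMulti F j v, ExteriorAlgebra.ιMulti_range F j (Set.mem_range_self v)⟩

/-- The exterior power filtration `∧^j W` on `⋀[F]^j V` associated to a filtration `W` on
`V`: `(∧^j W)_i` is the span of the wedges `v₁ ∧ ⋯ ∧ v_j` with `v_k ∈ W_{i_k}` and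
`i₁ + ⋯ + i_j = i`. -/
def extPowerFiltration (F : Type*) {V : Type*} [Field F] [AddCommGroup V] [Module F V]
    (j : ℕ) (W : ℤ → Submodule F V) (i : ℤ) : Submodule F (⋀[F]^j V) :=
  ⨆ c : {c : Fin j → ℤ // ∑ k, c k = i},
    Submodule.span F
      {x : ⋀[F]^j V | ∃ v : Fin j → V, (∀ k, v k ∈ W (c.1 k)) ∧ wedge F j v = x}

/-!
Write `M = Mₛ (1 + n)` with `n = Mₛ⁻¹ Mₙ`. Multiplying a nilpotent endomorphism by an automorphism
commuting with it does not change its weight filtration, so `W` belongs to `n`, and the nilpotent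
part of `⋀ʲ M` is `⋀ʲ Mₛ · (⋀ʲ (1 + n) - 1)`, whose weight filtration is that of `⋀ʲ (1 + n) - 1`.
The latter agrees with the derivation `D n` of `⋀ʲ V` induced by `n` up to terms lowering `⋀ʲ W` by
at least `4`, and perturbations lowering the weight by at least `3` are harmless as well.

By Jacobson–Morozov `n` is the lowering operator of an `sl₂`-triple with semisimple element `h`, and
its weight filtration is the filtration by the eigenvalues of `h`. The triple acts on `⋀ʲ V` by
derivations, so the weight filtration of `D n` is the filtration by the eigenvalues of `D h`. These
are the sums of `j` eigenvalues of `h`, which identifies that filtration with `⋀ʲ W`.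
-/

section WeightFiltration

variable {F V V' : Type*} [Field F] [AddCommGroup V] [Module F V] [AddCommGroup V'] [Module F V']

namespace IsWeightFiltration

variable {N Q : Module.End F V} {N' : Module.End F V'} {w : ℤ}
  {W W₁ : ℤ → Submodule F V} {W' : ℤ → Submodule F V'}

theorem monotone (h : IsWeightFiltration N w W) : Monotone W := h.1

theorem map_le_sub_two (h : IsWeightFiltration N w W) (i : ℤ) : (W i).map N ≤ W (i - 2) :=
  h.2.2.2.1 i

theorem pow_apply_mem (h : IsWeightFiltration N w W) (a : ℕ) {i : ℤ} {v : V} (hv : v ∈ W i) :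
    (N ^ a) v ∈ W (i - 2 * a) := by
  induction a with
  | zero => simpa using hv
  | succ a ih =>
    rw [pow_succ', Module.End.mul_apply,
      show i - 2 * ((a + 1 : ℕ) : ℤ) = i - 2 * a - 2 by push_cast; ring]
    exact h.map_le_sub_two _ (Submodule.mem_map_of_mem ih)

theorem le_sup_map_pow (h : IsWeightFiltration N w W) (a : ℕ) :
    W (w - a) ≤ W (w - a - 1) ⊔ (W (w + a)).map (N ^ a) := by
  rcases Nat.eq_zero_or_pos a with rfl | ha
  · simp [Module.End.one_eq_id]
  · exact (h.2.2.2.2 a (by omega)).1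

theorem mem_of_pow_apply_mem (h : IsWeightFiltration N w W) (a : ℕ) {v : V}
    (hv : v ∈ W (w + a)) (hNv : (N ^ a) v ∈ W (w - a - 1)) : v ∈ W (w + a - 1) := by
  rcases Nat.eq_zero_or_pos a with rfl | ha
  · simpa using hNv
  · exact (h.2.2.2.2 a (by omega)).2 v hv hNv

theorem eq_map_pow (h : IsWeightFiltration N w W) (a : ℕ) :
    W (w - a) = (W (w + a)).map (N ^ a) := by
  apply le_antisymm
  · induction a using Nat.strong_decreasing_induction with
    | base =>
      obtain ⟨b, hb⟩ := h.2.1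
      exact ⟨(w - b).toNat, fun a ha ↦ by rw [hb _ (by omega)]; exact bot_le⟩
    | step a ih =>
      refine (h.le_sup_map_pow a).trans (sup_le ?_ le_rfl)
      rw [show w - a - 1 = w - ((a + 1 : ℕ) : ℤ) by push_cast; ring]
      refine (ih (a + 1) a.lt_succ_self).trans ?_
      rw [pow_succ, Module.End.mul_eq_comp, Submodule.map_comp]
      exact Submodule.map_mono ((h.map_le_sub_two _).trans (h.monotone (by push_cast; omega)))
  · rintro _ ⟨v, hv, rfl⟩
    exact h.monotone (by omega) (h.pow_apply_mem a hv)

theorem mem_add_iff_pow_succ_mem (h : IsWeightFiltration N w W) (a : ℕ) {v : V} :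
    v ∈ W (w + a) ↔ (N ^ (a + 1)) v ∈ W (w - (a + 2 : ℕ)) := by
  refine ⟨fun hv ↦ h.monotone (by push_cast; omega) (h.pow_apply_mem (a + 1) hv), fun hNv ↦ ?_⟩
  have descend (d : ℕ) (hd : v ∈ W (w + (a + d : ℕ))) : v ∈ W (w + a) := by
    induction d with
    | zero => exact hd
    | succ d ih =>
      have hpow : (N ^ (a + (d + 1))) v ∈ W (w - (a + (d + 1) : ℕ) - 1) := by
        rw [show a + (d + 1) = d + (a + 1) by ring, pow_add, Module.End.mul_apply]
        exact h.monotone (by push_cast; omega) (h.pow_apply_mem d hNv)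
      exact ih (h.monotone (by push_cast; omega) (h.mem_of_pow_apply_mem _ hd hpow))
  obtain ⟨b, hb⟩ := h.2.2.1
  refine descend (b - w).toNat ?_
  rw [hb _ (by push_cast; omega)]
  exact Submodule.mem_top

-- Descending induction on the weight: `N` determines `W (w + a)` from `W (w + a + 2)`.
theorem map_le_of_comp_eq_comp (h : IsWeightFiltration N w W) (h' : IsWeightFiltration N' w W')
    {S : V →ₗ[F] V'} (hS : S ∘ₗ N = N' ∘ₗ S) (i : ℤ) : (W i).map S ≤ W' i := by
  have hpow (a : ℕ) (v : V) : S ((N ^ a) v) = (N' ^ a) (S v) :=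
    LinearMap.congr_fun (Module.End.commute_pow_left_of_commute hS.symm a).symm v
  have below (a : ℕ) (ha : (W (w + a)).map S ≤ W' (w + a)) :
      (W (w - a)).map S ≤ W' (w - a) := by
    rw [h.eq_map_pow, h'.eq_map_pow]
    rintro _ ⟨_, ⟨v, hv, rfl⟩, rfl⟩
    exact ⟨S v, ha (Submodule.mem_map_of_mem hv), (hpow a v).symm⟩
  have above (a : ℕ) : (W (w + a)).map S ≤ W' (w + a) := by
    induction a using Nat.strong_decreasing_induction with
    | base =>
      obtain ⟨b, hb⟩ := h'.2.2.1
      exact ⟨(b - w).toNat, fun a ha ↦ by rw [hb _ (by omega)]; exact le_top⟩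
    | step a ih =>
      rintro _ ⟨v, hv, rfl⟩
      rw [h'.mem_add_iff_pow_succ_mem, ← hpow]
      rw [SetLike.mem_coe, h.mem_add_iff_pow_succ_mem] at hv
      exact below (a + 2) (ih (a + 2) (by omega)) (Submodule.mem_map_of_mem hv)
  rcases le_total w i with hi | hi
  · obtain ⟨a, rfl⟩ := Int.le.dest hi
    exact above a
  · obtain ⟨a, ha⟩ := Int.le.dest hi
    obtain rfl : i = w - a := by omega
    exact below a (above a)

theorem unique (h : IsWeightFiltration N w W) (h₁ : IsWeightFiltration N w W₁) : W = W₁ := by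
  have le_of {W W₁ : ℤ → Submodule F V} (h : IsWeightFiltration N w W)
      (h₁ : IsWeightFiltration N w W₁) (i : ℤ) : W i ≤ W₁ i := by
    simpa using h.map_le_of_comp_eq_comp h₁ (S := LinearMap.id) rfl i
  exact funext fun i ↦ le_antisymm (le_of h h₁ i) (le_of h₁ h i)

theorem map_unit_eq (h : IsWeightFiltration N w W) {u : (Module.End F V)ˣ}
    (hu : Commute (u : Module.End F V) N) (i : ℤ) :
    (W i).map (u : Module.End F V) = W i := by
  refine le_antisymm (h.map_le_of_comp_eq_comp h hu.eq i) fun v hv ↦ ?_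
  refine ⟨(↑u⁻¹ : Module.End F V) v, ?_, LinearMap.congr_fun u.mul_inv v⟩
  exact h.map_le_of_comp_eq_comp h hu.units_inv_left.eq i (Submodule.mem_map_of_mem hv)

theorem unit_mul (h : IsWeightFiltration N w W) {u : (Module.End F V)ˣ}
    (hu : Commute (u : Module.End F V) N) :
    IsWeightFiltration ((u : Module.End F V) * N) w W := by
  have map_pow (a : ℕ) (i : ℤ) : (W i).map ((u : Module.End F V) ^ a) = W i := by
    rw [← Units.val_pow_eq_pow_val]
    exact h.map_unit_eq (by simpa using hu.pow_left a) i
  refine ⟨h.monotone, h.2.1, h.2.2.1, fun i ↦ ?_, fun α hα ↦ ?_⟩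
  · rw [Module.End.mul_eq_comp, Submodule.map_comp]
    exact (Submodule.map_mono (h.map_le_sub_two i)).trans (h.map_unit_eq hu _).le
  · lift α to ℕ using hα.le
    rw [Int.toNat_natCast, hu.mul_pow]
    constructor
    · calc W (w - α) = (W (w - α)).map ((u : Module.End F V) ^ α) := (map_pow α _).symm
        _ ≤ (W (w - α - 1) ⊔ (W (w + α)).map (N ^ α)).map ((u : Module.End F V) ^ α) :=
          Submodule.map_mono (h.le_sup_map_pow α)
        _ = W (w - α - 1) ⊔ (W (w + α)).map ((u : Module.End F V) ^ α * N ^ α) := by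
          rw [Submodule.map_sup, map_pow, Module.End.mul_eq_comp, Submodule.map_comp]
    · intro v hv hv'
      refine h.mem_of_pow_apply_mem α hv ?_
      rw [← map_pow α] at hv'
      obtain ⟨y, hy, hyv⟩ := hv'
      have pow_injective := ((Module.End.isUnit_iff _).mp (u.isUnit.pow α)).injective
      rwa [← pow_injective hyv]

theorem map_le_sub_two_of_sub_map_le (h : IsWeightFiltration N w W)
    (hQ : ∀ i, (W i).map (Q - N) ≤ W (i - 3)) (i : ℤ) : (W i).map Q ≤ W (i - 2) := by
  rintro _ ⟨v, hv, rfl⟩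
  rw [← sub_add_cancel Q N, LinearMap.add_apply]
  exact add_mem (h.monotone (by omega) (hQ i (Submodule.mem_map_of_mem hv)))
    (h.map_le_sub_two i (Submodule.mem_map_of_mem hv))

theorem pow_sub_pow_apply_mem (h : IsWeightFiltration N w W)
    (hQ : ∀ i, (W i).map (Q - N) ≤ W (i - 3)) (a : ℕ) {i : ℤ} {v : V} (hv : v ∈ W i) :
    (Q ^ a) v - (N ^ a) v ∈ W (i - 2 * a - 1) := by
  induction a with
  | zero => simp
  | succ a ih =>
    have telescope : (Q ^ (a + 1)) v - (N ^ (a + 1)) v =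
        Q ((Q ^ a) v - (N ^ a) v) + (Q - N) ((N ^ a) v) := by
      simp [pow_succ']
    rw [telescope]
    refine add_mem (h.monotone ?_ (h.map_le_sub_two_of_sub_map_le hQ _
      (Submodule.mem_map_of_mem ih))) (h.monotone ?_ (hQ _
      (Submodule.mem_map_of_mem (h.pow_apply_mem a hv)))) <;> push_cast <;> omega

theorem of_sub_map_le (h : IsWeightFiltration N w W)
    (hQ : ∀ i, (W i).map (Q - N) ≤ W (i - 3)) : IsWeightFiltration Q w W := by
  refine ⟨h.monotone, h.2.1, h.2.2.1, h.map_le_sub_two_of_sub_map_le hQ, fun α hα ↦ ?_⟩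
  lift α to ℕ using hα.le
  rw [Int.toNat_natCast]
  have sub_mem_lower {v : V} (hv : v ∈ W (w + α)) : (Q ^ α) v - (N ^ α) v ∈ W (w - α - 1) :=
    h.monotone (by omega) (h.pow_sub_pow_apply_mem hQ α hv)
  refine ⟨(h.le_sup_map_pow α).trans (sup_le le_sup_left ?_), fun v hv hQv ↦ ?_⟩
  · rintro _ ⟨v, hv, rfl⟩
    rw [show (N ^ α) v = -((Q ^ α) v - (N ^ α) v) + (Q ^ α) v by abel]
    exact Submodule.add_mem_sup (neg_mem (sub_mem_lower hv)) (Submodule.mem_map_of_mem hv)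
  · refine h.mem_of_pow_apply_mem α hv ?_
    rw [← sub_sub_self ((Q ^ α) v) ((N ^ α) v)]
    exact sub_mem hQv (sub_mem_lower hv)

theorem isNilpotent (h : IsWeightFiltration N w W) : IsNilpotent N := by
  obtain ⟨a, ha⟩ := h.2.1
  obtain ⟨b, hb⟩ := h.2.2.1
  refine ⟨(b - a).toNat, LinearMap.ext fun v ↦ ?_⟩
  have hv : v ∈ W b := by rw [hb b le_rfl]; exact Submodule.mem_top
  have hNv := h.pow_apply_mem (b - a).toNat hv
  rwa [ha _ (by omega), Submodule.mem_bot] at hNv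

end IsWeightFiltration

end WeightFiltration

section Sl2

variable {F V : Type*} [Field F] [AddCommGroup V] [Module F V]

/-- An `𝔰𝔩₂`-triple of endomorphisms whose semisimple element `h` is diagonalizable with integer
eigenvalues. Unlike in Mathlib's `IsSl2Triple`, `h = 0` is allowed, so that the zero endomorphism
belongs to such a triple. -/
structure IsIntegralSl2Triple (h e f : Module.End F V) : Prop where
  lie_e_f : ⁅e, f⁆ = h
  lie_h_e : ⁅h, e⁆ = 2 • e
  lie_h_f : ⁅h, f⁆ = -(2 • f)
  iSup_eigenspace_eq_top : ⨆ m : ℤ, h.eigenspace (m : F) = ⊤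

theorem eigenspace_neg (h : Module.End F V) (μ : F) : (-h).eigenspace μ = h.eigenspace (-μ) := by
  ext v
  simp [neg_eq_iff_eq_neg]

/-- The filtration of `V` by the integer eigenvalues of `h`, shifted by `w`: its `i`-th step is the
sum of the eigenspaces of the eigenvalues `m ≤ i - w`. -/
def eigenFiltration (h : Module.End F V) (w i : ℤ) : Submodule F V :=
  ⨆ m : ℤ, ⨆ _ : w + m ≤ i, h.eigenspace (m : F)

theorem eigenspace_le_eigenFiltration (h : Module.End F V) {w i m : ℤ} (hm : w + m ≤ i) :
    h.eigenspace (m : F) ≤ eigenFiltration h w i :=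
  le_iSup₂ (f := fun (m : ℤ) (_ : w + m ≤ i) ↦ h.eigenspace (m : F)) m hm

theorem eigenFiltration_le_iff {h : Module.End F V} {w i : ℤ} {U : Submodule F V} :
    eigenFiltration h w i ≤ U ↔ ∀ m : ℤ, w + m ≤ i → h.eigenspace (m : F) ≤ U :=
  iSup₂_le_iff

theorem eigenFiltration_mono (h : Module.End F V) (w : ℤ) : Monotone (eigenFiltration h w) :=
  fun _ _ hij ↦ eigenFiltration_le_iff.2 fun _ hm ↦ eigenspace_le_eigenFiltration h (hm.trans hij)

theorem eigenFiltration_le_sup_eigenspace (h : Module.End F V) (w m : ℤ) :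
    eigenFiltration h w (w + m) ≤ eigenFiltration h w (w + m - 1) ⊔ h.eigenspace (m : F) := by
  refine eigenFiltration_le_iff.2 fun l hl ↦ ?_
  rcases (show l ≤ m by omega).lt_or_eq with hlt | rfl
  · exact (eigenspace_le_eigenFiltration h (by omega)).trans le_sup_left
  · exact le_sup_right

theorem disjoint_eigenspace_eigenFiltration [CharZero F] (h : Module.End F V) {w i m : ℤ}
    (hi : i < w + m) : Disjoint (h.eigenspace (m : F)) (eigenFiltration h w i) :=
  (h.eigenspaces_iSupIndep.comp Int.cast_injective).disjoint_biSup
    (x := m) (y := {l | w + l ≤ i}) hi.not_ge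

theorem exists_eigenspace_intCast_eq_bot [CharZero F] [FiniteDimensional F V]
    (h : Module.End F V) : ∃ b : ℕ, ∀ m : ℤ, b < m.natAbs → h.eigenspace (m : F) = ⊥ := by
  have finite_eigenvalues : {m : ℤ | h.HasEigenvalue (m : F)}.Finite :=
    h.finite_hasEigenvalue.preimage Int.cast_injective.injOn
  obtain ⟨b, hb⟩ := (finite_eigenvalues.image Int.natAbs).bddAbove
  refine ⟨b, fun m hm ↦ ?_⟩
  by_contra hne
  exact hm.not_ge (hb ⟨m, Module.End.hasEigenvalue_iff.2 hne, rfl⟩)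

namespace IsIntegralSl2Triple

variable {h e f : Module.End F V}

theorem symm (t : IsIntegralSl2Triple h e f) : IsIntegralSl2Triple (-h) f e where
  lie_e_f := by simp only [← t.lie_e_f, Ring.lie_def, neg_sub]
  lie_h_e := by rw [← neg_inj, ← t.lie_h_f, Ring.lie_def, Ring.lie_def]; noncomm_ring
  lie_h_f := by rw [← t.lie_h_e, Ring.lie_def, Ring.lie_def]; noncomm_ring
  iSup_eigenspace_eq_top := by
    rw [← t.iSup_eigenspace_eq_top, ← (Equiv.neg ℤ).iSup_comp]
    simp [eigenspace_neg]

theorem e_apply_mem_eigenspace (t : IsIntegralSl2Triple h e f) {μ : F} {v : V}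
    (hv : v ∈ h.eigenspace μ) : e v ∈ h.eigenspace (μ + 2) := by
  have hev := LinearMap.congr_fun t.lie_h_e v
  rw [Module.End.mem_eigenspace_iff] at hv ⊢
  simp only [Ring.lie_def, LinearMap.sub_apply, Module.End.mul_apply, hv, map_smul,
    LinearMap.smul_apply, sub_eq_iff_eq_add] at hev
  rw [hev]
  module

theorem f_apply_mem_eigenspace (t : IsIntegralSl2Triple h e f) {μ : F} {v : V}
    (hv : v ∈ h.eigenspace μ) : f v ∈ h.eigenspace (μ - 2) := by
  have hfv := LinearMap.congr_fun t.lie_h_f v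
  rw [Module.End.mem_eigenspace_iff] at hv ⊢
  simp only [Ring.lie_def, LinearMap.sub_apply, Module.End.mul_apply, hv, map_smul,
    LinearMap.neg_apply, LinearMap.smul_apply, sub_eq_iff_eq_add] at hfv
  rw [hfv]
  module

theorem f_pow_apply_mem_eigenspace (t : IsIntegralSl2Triple h e f) (k : ℕ) {μ : F} {v : V}
    (hv : v ∈ h.eigenspace μ) : (f ^ k) v ∈ h.eigenspace (μ - 2 * k) := by
  induction k with
  | zero => simpa using hv
  | succ k ih =>
    rw [pow_succ', Module.End.mul_apply]
    convert t.f_apply_mem_eigenspace ih using 2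
    push_cast
    ring

theorem e_apply_f_apply (t : IsIntegralSl2Triple h e f) (v : V) : e (f v) = f (e v) + h v := by
  rw [← t.lie_e_f]
  simp [Ring.lie_def]

theorem e_apply_f_pow_succ_apply (t : IsIntegralSl2Triple h e f) (k : ℕ) {μ : F} {v : V}
    (hv : v ∈ h.eigenspace μ) :
    e ((f ^ (k + 1)) v) = (f ^ (k + 1)) (e v) + ((k + 1) * (μ - k)) • (f ^ k) v := by
  induction k with
  | zero => simp [t.e_apply_f_apply, Module.End.mem_eigenspace_iff.1 hv]
  | succ k ih =>
    have h_f_pow := Module.End.mem_eigenspace_iff.1 (t.f_pow_apply_mem_eigenspace (k + 1) hv)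
    rw [pow_succ' f (k + 1), Module.End.mul_apply, t.e_apply_f_apply, ih, h_f_pow, map_add,
      map_smul, Module.End.mul_apply, pow_succ' f k, Module.End.mul_apply]
    push_cast
    module

-- If `f ^ k` kills `v`, then `f ^ (k + 1)` kills `e v`, whose weight is larger.
theorem eq_zero_of_f_pow_apply_eq_zero [CharZero F] [FiniteDimensional F V]
    (t : IsIntegralSl2Triple h e f) {m k : ℕ} (hk : k ≤ m) {v : V}
    (hv : v ∈ h.eigenspace (m : F)) (hfv : (f ^ k) v = 0) : v = 0 := by
  induction m using Nat.strong_decreasing_induction generalizing k v with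
  | base =>
    obtain ⟨b, hb⟩ := exists_eigenspace_intCast_eq_bot h
    refine ⟨b, fun m hm _ _ v hv _ ↦ ?_⟩
    simpa [show h.eigenspace (m : F) = ⊥ by exact_mod_cast hb m hm] using hv
  | step m ih =>
    induction k with
    | zero => exact hfv
    | succ k ihk =>
      have e_f_pow := t.e_apply_f_pow_succ_apply k hv
      have ev_eq_zero : e v = 0 := by
        refine ih (m + 2) (by omega) (k := k + 2) (by omega)
          (by exact_mod_cast t.e_apply_mem_eigenspace hv) ?_
        have f_pow_e : (f ^ (k + 1)) (e v) = -((k + 1 : F) * (m - k)) • (f ^ k) v := by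
          rw [hfv, map_zero] at e_f_pow
          rw [neg_smul]
          exact eq_neg_of_add_eq_zero_left e_f_pow.symm
        rw [pow_succ', Module.End.mul_apply, f_pow_e, map_smul, ← Module.End.mul_apply,
          ← pow_succ', hfv, smul_zero]
      have coeff_ne_zero : ((k : F) + 1) * (m - k) ≠ 0 :=
        mul_ne_zero k.cast_add_one_ne_zero (sub_ne_zero.2 (by exact_mod_cast ne_of_gt hk))
      refine ihk (by omega) ?_
      simpa [hfv, ev_eq_zero, coeff_ne_zero] using e_f_pow.symm

theorem f_pow_apply_mem_eigenspace_neg (t : IsIntegralSl2Triple h e f) (a : ℕ) {v : V}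
    (hv : v ∈ h.eigenspace (a : F)) : (f ^ a) v ∈ h.eigenspace (-a : F) := by
  convert t.f_pow_apply_mem_eigenspace a hv using 2
  ring

theorem injective_f_pow_restrict [CharZero F] [FiniteDimensional F V]
    (t : IsIntegralSl2Triple h e f) (a : ℕ) :
    Function.Injective
      ((f ^ a).restrict fun _ hv ↦ t.f_pow_apply_mem_eigenspace_neg a hv) :=
  (injective_iff_map_eq_zero _).2 fun v hv ↦
    Subtype.ext (t.eq_zero_of_f_pow_apply_eq_zero le_rfl v.2 (congrArg Subtype.val hv))

theorem map_f_pow_eigenspace [CharZero F] [FiniteDimensional F V]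
    (t : IsIntegralSl2Triple h e f) (a : ℕ) :
    (h.eigenspace (a : F)).map (f ^ a) = h.eigenspace (-a : F) := by
  have finrank_eq : Module.finrank F (h.eigenspace (a : F)) =
      Module.finrank F (h.eigenspace (-a : F)) := by
    refine le_antisymm (LinearMap.finrank_le_finrank_of_injective (t.injective_f_pow_restrict a)) ?_
    have := LinearMap.finrank_le_finrank_of_injective (t.symm.injective_f_pow_restrict a)
    rwa [eigenspace_neg, eigenspace_neg, neg_neg] at this
  refine le_antisymm (Submodule.map_le_iff_le_comap.2 fun v hv ↦
    t.f_pow_apply_mem_eigenspace_neg a hv) fun y hy ↦ ?_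
  obtain ⟨x, hx⟩ := (LinearMap.injective_iff_surjective_of_finrank_eq_finrank finrank_eq).1
    (t.injective_f_pow_restrict a) ⟨y, hy⟩
  exact ⟨x, x.2, congrArg Subtype.val hx⟩

theorem map_f_pow_eigenFiltration_le (t : IsIntegralSl2Triple h e f) (w i : ℤ) (a : ℕ) :
    (eigenFiltration h w i).map (f ^ a) ≤ eigenFiltration h w (i - 2 * a) := by
  rw [Submodule.map_le_iff_le_comap, eigenFiltration_le_iff]
  intro m hm v hv
  refine eigenspace_le_eigenFiltration h (m := m - 2 * a) (by omega) ?_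
  simpa using t.f_pow_apply_mem_eigenspace a hv

theorem map_f_eigenFiltration_le (t : IsIntegralSl2Triple h e f) (w i : ℤ) :
    (eigenFiltration h w i).map f ≤ eigenFiltration h w (i - 2) := by
  simpa using t.map_f_pow_eigenFiltration_le w i 1

theorem mem_eigenFiltration_of_f_pow_apply_mem [CharZero F] [FiniteDimensional F V]
    (t : IsIntegralSl2Triple h e f) {w : ℤ} {a : ℕ} {v : V}
    (hv : v ∈ eigenFiltration h w (w + a))
    (hfv : (f ^ a) v ∈ eigenFiltration h w (w - a - 1)) :
    v ∈ eigenFiltration h w (w + a - 1) := by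
  obtain ⟨y, hy, z, hz, rfl⟩ :=
    Submodule.mem_sup.1 (eigenFiltration_le_sup_eigenspace h w a hv)
  rw [Int.cast_natCast] at hz
  have f_pow_y_mem : (f ^ a) y ∈ eigenFiltration h w (w - a - 1) :=
    eigenFiltration_mono h w (by omega)
      (t.map_f_pow_eigenFiltration_le w _ a (Submodule.mem_map_of_mem hy))
  have f_pow_z_mem : (f ^ a) z ∈ eigenFiltration h w (w - a - 1) := by
    simpa using sub_mem hfv f_pow_y_mem
  have f_pow_z_eq_zero : (f ^ a) z = 0 :=
    Submodule.disjoint_def.1 (disjoint_eigenspace_eigenFiltration h (m := -a) (by omega)) _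
      (by simpa using t.f_pow_apply_mem_eigenspace_neg a hz) f_pow_z_mem
  rwa [t.eq_zero_of_f_pow_apply_eq_zero le_rfl hz f_pow_z_eq_zero, add_zero]

theorem isWeightFiltration [CharZero F] [FiniteDimensional F V]
    (t : IsIntegralSl2Triple h e f) (w : ℤ) : IsWeightFiltration f w (eigenFiltration h w) := by
  obtain ⟨b, hb⟩ := exists_eigenspace_intCast_eq_bot h
  refine ⟨eigenFiltration_mono h w, ⟨w - b - 1, fun i hi ↦ ?_⟩, ⟨w + b, fun i hi ↦ ?_⟩,
    t.map_f_eigenFiltration_le w, fun α hα ↦ ?_⟩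
  · exact eq_bot_iff.2 (eigenFiltration_le_iff.2 fun m hm ↦ (hb m (by omega)).le)
  · rw [eq_top_iff, ← t.iSup_eigenspace_eq_top]
    refine iSup_le fun m ↦ ?_
    rcases le_or_gt m.natAbs b with hm | hm
    · exact eigenspace_le_eigenFiltration h (by omega)
    · exact (hb m hm).le.trans bot_le
  · lift α to ℕ using hα.le
    rw [Int.toNat_natCast]
    refine ⟨?_, fun v hv hfv ↦ t.mem_eigenFiltration_of_f_pow_apply_mem hv hfv⟩
    refine (eigenFiltration_le_sup_eigenspace h w (-α)).trans (sup_le_sup_left ?_ _)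
    rw [Int.cast_neg, Int.cast_natCast, ← t.map_f_pow_eigenspace]
    have := eigenspace_le_eigenFiltration h (le_refl (w + α))
    exact Submodule.map_mono (by rwa [Int.cast_natCast] at this)

end IsIntegralSl2Triple

end Sl2

section JacobsonMorozov

open Polynomial

theorem exists_basis_quotient_span_X_pow (F : Type*) [Field F] (k : ℕ) :
    ∃ b : Module.Basis (Fin k) F (F[X] ⧸ (F[X] ∙ (X : F[X]) ^ k)),
      ∀ l, b l = Submodule.Quotient.mk (X ^ (l : ℕ)) := by
  let pb := AdjoinRoot.powerBasis' (monic_X_pow (R := F) k)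
  have dim_eq : pb.dim = k := natDegree_X_pow k
  have basis_apply (l : Fin k) :
      pb.basis.reindex (finCongr dim_eq) l = AdjoinRoot.mk ((X : F[X]) ^ k) (X ^ (l : ℕ)) := by
    rw [Module.Basis.reindex_apply, pb.basis_eq_pow, map_pow]
    rfl
  exact ⟨pb.basis.reindex (finCongr dim_eq), basis_apply⟩

variable {F V : Type*} [Field F] [AddCommGroup V] [Module F V]

theorem isIntegralSl2Triple_of_jordan_basis {n : Module.End F V} {ι : Type*} {k : ι → ℕ}
    {x : ι → V} (hx : ∀ i, (n ^ k i) (x i) = 0) (B : Module.Basis (Σ i, Fin (k i)) F V)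
    (hB : ∀ p, B p = (n ^ (p.2 : ℕ)) (x p.1)) {h e : Module.End F V}
    (hh : ∀ p, h (B p) = (k p.1 - 1 - 2 * p.2 : F) • B p)
    (he : ∀ p, e (B p) = (p.2 * (k p.1 - p.2) : F) • (n ^ (p.2 - 1 : ℕ)) (x p.1)) :
    IsIntegralSl2Triple h e n := by
  have h_pow (i : ι) (l : ℕ) (hl : l ≤ k i) :
      h ((n ^ l) (x i)) = (k i - 1 - 2 * l : F) • (n ^ l) (x i) := by
    rcases hl.eq_or_lt with rfl | hl
    · simp [hx]
    · simpa [hB] using hh ⟨i, l, hl⟩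
  have e_pow (i : ι) (l : ℕ) (hl : l ≤ k i) :
      e ((n ^ l) (x i)) = (l * (k i - l) : F) • (n ^ (l - 1)) (x i) := by
    rcases hl.eq_or_lt with rfl | hl
    · simp [hx]
    · simpa [hB] using he ⟨i, l, hl⟩
  have n_pow (i : ι) (l : ℕ) : n ((n ^ l) (x i)) = (n ^ (l + 1)) (x i) := by
    rw [pow_succ', Module.End.mul_apply]
  refine ⟨B.ext fun ⟨i, l, hl⟩ ↦ ?_, B.ext fun ⟨i, l, hl⟩ ↦ ?_, B.ext fun ⟨i, l, hl⟩ ↦ ?_, ?_⟩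
  · simp only [Ring.lie_def, hB, LinearMap.sub_apply, Module.End.mul_apply, n_pow,
      h_pow i l hl.le, e_pow i l hl.le, e_pow i (l + 1) hl, map_smul]
    rcases l with _ | l
    · simp
    · simp only [Nat.add_sub_cancel]
      push_cast
      module
  · simp only [Ring.lie_def, hB, LinearMap.sub_apply, Module.End.mul_apply, LinearMap.smul_apply,
      h_pow i l hl.le, e_pow i l hl.le, h_pow i (l - 1) (by omega), map_smul]
    rcases l with _ | l
    · simp
    · simp only [Nat.add_sub_cancel]
      push_cast
      module
  · simp only [Ring.lie_def, hB, LinearMap.sub_apply, Module.End.mul_apply, LinearMap.neg_apply,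
      LinearMap.smul_apply, n_pow, h_pow i l hl.le, h_pow i (l + 1) hl, map_smul]
    push_cast
    module
  · rw [eq_top_iff, ← B.span_eq, Submodule.span_le]
    rintro _ ⟨p, rfl⟩
    refine Submodule.mem_iSup_of_mem (k p.1 - 1 - 2 * p.2 : ℤ) ?_
    simpa [Module.End.mem_eigenspace_iff] using hh p

variable [FiniteDimensional F V]

theorem exists_linearEquiv_pi_quotient_span_X_pow {n : Module.End F V} (hn : IsNilpotent n) :
    ∃ (d : ℕ) (k : Fin d → ℕ), Nonempty
      (Module.AEval' n ≃ₗ[F[X]] (∀ i : Fin d, F[X] ⧸ (F[X] ∙ (X : F[X]) ^ k i))) := by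
  obtain ⟨N, hN⟩ := hn
  have X_torsion : Module.IsTorsion' (Module.AEval' n) (Submonoid.powers (X : F[X])) := by
    intro x
    obtain ⟨v, rfl⟩ := (Module.AEval'.of n).surjective x
    refine ⟨⟨X ^ N, pow_mem (Submonoid.mem_powers X) N⟩, ?_⟩
    rw [Submonoid.mk_smul, Module.AEval.X_pow_smul_of, hN, zero_smul, map_zero]
  obtain ⟨d, k, ⟨φ⟩⟩ := Module.torsion_by_prime_power_decomposition irreducible_X X_torsion
  exact ⟨d, k, ⟨φ.trans (DirectSum.linearEquivFunOnFintype _ _ _)⟩⟩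

theorem exists_jordan_basis {n : Module.End F V} (hn : IsNilpotent n) :
    ∃ (d : ℕ) (k : Fin d → ℕ) (x : Fin d → V), (∀ i, (n ^ k i) (x i) = 0) ∧
      ∃ B : Module.Basis (Σ i, Fin (k i)) F V, ∀ p, B p = (n ^ (p.2 : ℕ)) (x p.1) := by
  obtain ⟨d, k, ⟨φ⟩⟩ := exists_linearEquiv_pi_quotient_span_X_pow hn
  let ψ : V ≃ₗ[F] (∀ i : Fin d, F[X] ⧸ (F[X] ∙ (X : F[X]) ^ k i)) :=
    (Module.AEval'.of n).trans (φ.restrictScalars F)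
  have ψ_pow (l : ℕ) (v : V) : ψ ((n ^ l) v) = (X : F[X]) ^ l • ψ v :=
    (congrArg φ (Module.AEval.X_pow_smul_of n v l).symm).trans (φ.map_smul _ _)
  let x (i : Fin d) : V := ψ.symm (Pi.single i (Submodule.Quotient.mk 1))
  have pow_x (i : Fin d) (l : ℕ) :
      (n ^ l) (x i) = ψ.symm (Pi.single i (Submodule.Quotient.mk (X ^ l))) := by
    rw [LinearEquiv.eq_symm_apply, ψ_pow, LinearEquiv.apply_symm_apply, ← Pi.single_smul,
      ← Submodule.Quotient.mk_smul, smul_eq_mul, mul_one]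
  choose b hb using fun i ↦ exists_basis_quotient_span_X_pow F (k i)
  refine ⟨d, k, x, fun i ↦ ?_, (Pi.basis b).map ψ.symm, fun p ↦ ?_⟩
  · rw [pow_x, (Submodule.Quotient.mk_eq_zero _).2 (Submodule.mem_span_singleton_self _),
      Pi.single_zero, map_zero]
  · rw [Module.Basis.map_apply, Pi.basis_apply, hb, pow_x]

theorem exists_isIntegralSl2Triple {n : Module.End F V} (hn : IsNilpotent n) :
    ∃ h e : Module.End F V, IsIntegralSl2Triple h e n := by
  obtain ⟨d, k, x, hx, B, hB⟩ := exists_jordan_basis hn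
  exact ⟨B.constr F _, B.constr F _, isIntegralSl2Triple_of_jordan_basis hx B hB
    (B.constr_basis F _) (B.constr_basis F _)⟩

end JacobsonMorozov

section ExteriorPowerDerivation

variable {R M N ι : Type*} [CommRing R] [AddCommGroup M] [Module R M] [AddCommGroup N] [Module R N]

theorem sum_alternatingMap_update_eq_zero [Fintype ι] [DecidableEq ι] (a : Module.End R M)
    (ω : M [⋀^ι]→ₗ[R] N) {v : ι → M} {p q : ι} (hpq : v p = v q) (hne : p ≠ q) :
    ∑ k, ω (Function.update v k (a (v k))) = 0 := by
  have swap_eq : Function.update v q (a (v q)) =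
      Function.update v p (a (v p)) ∘ Equiv.swap p q := by
    rw [Function.update_comp_equiv, Equiv.symm_swap, Equiv.swap_apply_left, hpq,
      Equiv.comp_swap_eq_update, hpq, Function.update_eq_self, ← hpq, Function.update_eq_self]
  rw [Fintype.sum_eq_add p q hne, swap_eq, ω.map_swap _ hne, add_neg_cancel]
  intro k hk
  exact ω.map_eq_zero_of_eq _ (by simp [hk.1.symm, hk.2.symm, hpq]) hne

theorem update_id_apply_eq_update [DecidableEq ι] (a : Module.End R M) (v : ι → M) (k : ι) :
    (fun l ↦ Function.update (fun _ ↦ LinearMap.id) k a l (v l)) =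
      Function.update v k (a (v k)) := by
  ext l
  rcases eq_or_ne l k with rfl | hl <;> simp [*]

/-- The action of an endomorphism `a` of `M` as a derivation on the alternating map `ω`:
`(v₁, …, vⱼ) ↦ ∑ₖ ω (v₁, …, a vₖ, …, vⱼ)`. -/
def alternatingMapDerivation [Fintype ι] [DecidableEq ι] (a : Module.End R M)
    (ω : M [⋀^ι]→ₗ[R] N) : M [⋀^ι]→ₗ[R] N where
  toMultilinearMap :=
    ∑ k, ω.toMultilinearMap.compLinearMap (Function.update (fun _ ↦ LinearMap.id) k a)
  map_eq_zero_of_eq' v p q hpq hne := by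
    simpa [update_id_apply_eq_update] using sum_alternatingMap_update_eq_zero a ω hpq hne

theorem alternatingMapDerivation_apply [Fintype ι] [DecidableEq ι] (a : Module.End R M)
    (ω : M [⋀^ι]→ₗ[R] N) (v : ι → M) :
    alternatingMapDerivation a ω v = ∑ k, ω (Function.update v k (a (v k))) := by
  simp [alternatingMapDerivation, ← AlternatingMap.coe_multilinearMap, update_id_apply_eq_update]

/-- The derivation of the exterior algebra extending the endomorphism `a` of `M`, restricted to
degree `j`. -/
noncomputable def extPowerDerivation (j : ℕ) :
    Module.End R M →ₗ[R] Module.End R (⋀[R]^j M) where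
  toFun a := exteriorPower.alternatingMapLinearEquiv
    (alternatingMapDerivation a (exteriorPower.ιMulti R j))
  map_add' a b := exteriorPower.linearMap_ext <| AlternatingMap.ext fun v ↦ by
    simp [alternatingMapDerivation_apply, Finset.sum_add_distrib]
  map_smul' c a := exteriorPower.linearMap_ext <| AlternatingMap.ext fun v ↦ by
    simp [alternatingMapDerivation_apply, Finset.smul_sum]

theorem extPowerDerivation_apply_ιMulti (j : ℕ) (a : Module.End R M) (v : Fin j → M) :
    extPowerDerivation j a (exteriorPower.ιMulti R j v) =
      ∑ k, exteriorPower.ιMulti R j (Function.update v k (a (v k))) := by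
  simp [extPowerDerivation, alternatingMapDerivation_apply]

theorem extPowerDerivation_lie (j : ℕ) (a b : Module.End R M) :
    extPowerDerivation j ⁅a, b⁆ = ⁅extPowerDerivation j a, extPowerDerivation j b⁆ := by
  refine exteriorPower.linearMap_ext <| AlternatingMap.ext fun v ↦ ?_
  simp only [LinearMap.compAlternatingMap_apply, Ring.lie_def, LinearMap.sub_apply,
    Module.End.mul_apply, extPowerDerivation_apply_ιMulti, map_sum]
  rw [Finset.sum_comm (f := fun k l ↦ exteriorPower.ιMulti R j (Function.update
    (Function.update v k (a (v k))) l (b (Function.update v k (a (v k)) l)))),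
    ← Finset.sum_sub_distrib]
  refine Finset.sum_congr rfl fun k _ ↦ ?_
  rw [← Finset.sum_sub_distrib, Finset.sum_eq_single k]
  · simp
  · intro l _ hl
    rw [Function.update_of_ne hl, Function.update_of_ne hl.symm, Function.update_comm hl, sub_self]
  · simp

theorem ιMulti_mem_eigenspace_extPowerDerivation {j : ℕ} {h : Module.End R M} {μ : Fin j → R}
    {v : Fin j → M} (hv : ∀ k, v k ∈ h.eigenspace (μ k)) :
    exteriorPower.ιMulti R j v ∈ (extPowerDerivation j h).eigenspace (∑ k, μ k) := by
  simp only [Module.End.mem_eigenspace_iff] at hv ⊢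
  simp [extPowerDerivation_apply_ιMulti, hv, Finset.sum_smul]

theorem map_one_add_apply_ιMulti (j : ℕ) (n : Module.End R M) (v : Fin j → M) :
    exteriorPower.map j (1 + n) (exteriorPower.ιMulti R j v) =
      exteriorPower.ιMulti R j v + extPowerDerivation j n (exteriorPower.ιMulti R j v) +
        ∑ s : Finset (Fin j) with 2 ≤ s.card,
          exteriorPower.ιMulti R j (s.piecewise (n ∘ v) v) := by
  rw [exteriorPower.map_apply_ιMulti, extPowerDerivation_apply_ιMulti,
    show (1 + n : Module.End R M) ∘ v = v + n ∘ v from rfl]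
  simpa only [AlternatingMap.coe_multilinearMap, MultilinearMap.linearDeriv_apply,
    Function.comp_apply] using
    (exteriorPower.ιMulti R j).toMultilinearMap.map_add_eq_map_add_linearDeriv_add v (n ∘ v)

theorem multilinearMap_apply_mem_of_mem_iSup [Finite ι] {κ : ι → Type*}
    (φ : MultilinearMap R (fun _ : ι ↦ M) N) {G : Submodule R N}
    {E : ∀ i, κ i → Submodule R M}
    (hφ : ∀ (c : ∀ i, κ i) (u : ι → M), (∀ i, u i ∈ E i (c i)) → φ u ∈ G)
    {v : ι → M} (hv : ∀ i, v i ∈ ⨆ k, E i k) : φ v ∈ G := by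
  classical
  have := Fintype.ofFinite ι
  simp only [Submodule.mem_iSup_iff_exists_finsupp] at hv
  choose x hx hv using hv
  rw [← funext hv]
  simp only [Finsupp.sum]
  rw [φ.map_sum_finset]
  exact sum_mem fun c _ ↦ hφ c _ fun i ↦ hx i (c i)

end ExteriorPowerDerivation

section ExteriorPowerFiltration

variable {F V : Type*} [Field F] [AddCommGroup V] [Module F V] {j : ℕ} {W : ℤ → Submodule F V}

theorem ιMulti_mem_extPowerFiltration {c : Fin j → ℤ} {v : Fin j → V}
    (hv : ∀ k, v k ∈ W (c k)) :
    exteriorPower.ιMulti F j v ∈ extPowerFiltration F j W (∑ k, c k) :=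
  Submodule.mem_iSup_of_mem ⟨c, rfl⟩ (Submodule.subset_span ⟨v, hv, rfl⟩)

theorem extPowerFiltration_le_iff {i : ℤ} {G : Submodule F (⋀[F]^j V)} :
    extPowerFiltration F j W i ≤ G ↔ ∀ c : Fin j → ℤ, ∑ k, c k = i → ∀ v : Fin j → V,
      (∀ k, v k ∈ W (c k)) → exteriorPower.ιMulti F j v ∈ G := by
  refine ⟨fun hG c hc v hv ↦ hG (hc ▸ ιMulti_mem_extPowerFiltration hv), fun hG ↦ ?_⟩
  refine iSup_le fun c ↦ Submodule.span_le.2 ?_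
  rintro _ ⟨v, hv, rfl⟩
  exact hG c.1 c.2 v hv

theorem extPowerFiltration_mono (hj : 0 < j) (hW : Monotone W) :
    Monotone (extPowerFiltration F j W) := by
  intro i i' hi
  refine extPowerFiltration_le_iff.2 fun c hc v hv ↦ ?_
  let c' : Fin j → ℤ := c + Pi.single ⟨0, hj⟩ (i' - i)
  have sum_c' : ∑ k, c' k = i' := by simp [c', Finset.sum_add_distrib, hc]
  have le_c' : c ≤ c' := le_add_of_nonneg_right (Pi.single_nonneg.2 (sub_nonneg.2 hi))
  rw [← sum_c']
  exact ιMulti_mem_extPowerFiltration fun k ↦ hW (le_c' k) (hv k)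

theorem iSup_extPowerFiltration_eq_top (hW : ⨆ i, W i = ⊤) :
    ⨆ i, extPowerFiltration F j W i = ⊤ := by
  rw [eq_top_iff, ← exteriorPower.ιMulti_span, Submodule.span_le]
  rintro _ ⟨v, rfl⟩
  refine multilinearMap_apply_mem_of_mem_iSup (exteriorPower.ιMulti F j).toMultilinearMap
    (E := fun _ ↦ W) (fun c u hu ↦ ?_) fun k ↦ hW ▸ Submodule.mem_top
  exact Submodule.mem_iSup_of_mem _ (ιMulti_mem_extPowerFiltration hu)

theorem extPowerFiltration_eigenspace_le (h : Module.End F V) (m : ℤ) :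
    extPowerFiltration F j (fun l ↦ h.eigenspace (l : F)) m ≤
      (extPowerDerivation j h).eigenspace (m : F) := by
  refine extPowerFiltration_le_iff.2 fun c hc v hv ↦ ?_
  rw [← hc, Int.cast_sum]
  exact ιMulti_mem_eigenspace_extPowerDerivation hv

theorem IsIntegralSl2Triple.extPowerDerivation {h e f : Module.End F V}
    (t : IsIntegralSl2Triple h e f) (j : ℕ) :
    IsIntegralSl2Triple (extPowerDerivation j h) (extPowerDerivation j e)
      (extPowerDerivation j f) where
  lie_e_f := by rw [← extPowerDerivation_lie, t.lie_e_f]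
  lie_h_e := by rw [← extPowerDerivation_lie, t.lie_h_e, map_nsmul]
  lie_h_f := by rw [← extPowerDerivation_lie, t.lie_h_f, map_neg, map_nsmul]
  iSup_eigenspace_eq_top :=
    top_unique ((iSup_extPowerFiltration_eq_top t.iSup_eigenspace_eq_top).ge.trans
      (iSup_mono (extPowerFiltration_eigenspace_le h)))

theorem extPowerFiltration_eigenspace_eq [CharZero F] {h : Module.End F V}
    (hh : ⨆ m : ℤ, h.eigenspace (m : F) = ⊤) (m : ℤ) :
    extPowerFiltration F j (fun l ↦ h.eigenspace (l : F)) m =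
      (extPowerDerivation j h).eigenspace (m : F) := by
  have eigenspaces_indep := (extPowerDerivation j h).eigenspaces_iSupIndep.comp
    (Int.cast_injective (α := F))
  exact congrFun ((eigenspaces_indep.le_iff_eq_of_iSup_eq_top
    (iSup_extPowerFiltration_eq_top hh)).1 (extPowerFiltration_eigenspace_le h)) m

theorem extPowerFiltration_eigenFiltration [CharZero F] (hj : 0 < j) {h : Module.End F V}
    (hh : ⨆ m : ℤ, h.eigenspace (m : F) = ⊤) (w : ℤ) :
    extPowerFiltration F j (eigenFiltration h w) =
      eigenFiltration (extPowerDerivation j h) (w * j) := by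
  funext i
  apply le_antisymm
  · refine extPowerFiltration_le_iff.2 fun c hc v hv ↦ ?_
    simp only [eigenFiltration, iSup_subtype'] at hv
    refine multilinearMap_apply_mem_of_mem_iSup (exteriorPower.ιMulti F j).toMultilinearMap
      (fun m u hu ↦ ?_) hv
    have weight_le : w * j + ∑ k, (m k : ℤ) ≤ i :=
      calc w * j + ∑ k, (m k : ℤ) = ∑ k, (w + m k) := by
            simp [Finset.sum_add_distrib, mul_comm]
        _ ≤ ∑ k, c k := Finset.sum_le_sum fun k _ ↦ (m k).2
        _ = i := hc
    refine eigenspace_le_eigenFiltration _ weight_le ?_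
    rw [Int.cast_sum]
    exact ιMulti_mem_eigenspace_extPowerDerivation hu
  · refine eigenFiltration_le_iff.2 fun m hm ↦ ?_
    rw [← extPowerFiltration_eigenspace_eq hh]
    refine extPowerFiltration_le_iff.2 fun c hc v hv ↦ ?_
    have weight_eq : ∑ k, (w + c k) = w * j + m := by
      simp [Finset.sum_add_distrib, mul_comm, hc]
    refine extPowerFiltration_mono hj (eigenFiltration_mono h w) (weight_eq.trans_le hm) ?_
    exact ιMulti_mem_extPowerFiltration fun k ↦ eigenspace_le_eigenFiltration h le_rfl (hv k)

theorem map_sub_one_sub_extPowerDerivation_map_le (hj : 0 < j) (hW : Monotone W)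
    {n : Module.End F V} (hn : ∀ i, (W i).map n ≤ W (i - 2)) (i : ℤ) :
    (extPowerFiltration F j W i).map
      (exteriorPower.map j (1 + n) - 1 - extPowerDerivation j n) ≤
        extPowerFiltration F j W (i - 3) := by
  rw [Submodule.map_le_iff_le_comap, extPowerFiltration_le_iff]
  intro c hc v hv
  have remainder :
      (exteriorPower.map j (1 + n) - 1 - extPowerDerivation j n : Module.End F (⋀[F]^j V))
        (exteriorPower.ιMulti F j v) = ∑ s : Finset (Fin j) with 2 ≤ s.card,
        exteriorPower.ιMulti F j (s.piecewise (n ∘ v) v) := by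
    simp only [LinearMap.sub_apply, map_one_add_apply_ιMulti, Module.End.one_apply]
    abel
  rw [Submodule.mem_comap, remainder]
  refine sum_mem fun s hs ↦ ?_
  have two_le_card : 2 ≤ s.card := (Finset.mem_filter.1 hs).2
  have weight_eq : ∑ k, (c k - if k ∈ s then 2 else 0) = i - 2 * s.card := by
    simp [hc, mul_comm]
  refine extPowerFiltration_mono hj hW (weight_eq.trans_le (by omega)) ?_
  refine ιMulti_mem_extPowerFiltration fun k ↦ ?_
  by_cases hk : k ∈ s
  · simpa [hk] using hn _ (Submodule.mem_map_of_mem (hv k))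
  · simpa [hk] using hv k

theorem IsWeightFiltration.extPowerDerivation [CharZero F] [FiniteDimensional F V] (hj : 0 < j)
    {n : Module.End F V} {w : ℤ} (h : IsWeightFiltration n w W) :
    IsWeightFiltration (extPowerDerivation j n) (w * j) (extPowerFiltration F j W) := by
  obtain ⟨H, e, t⟩ := exists_isIntegralSl2Triple h.isNilpotent
  rw [h.unique (t.isWeightFiltration w),
    extPowerFiltration_eigenFiltration hj t.iSup_eigenspace_eq_top]
  exact (t.extPowerDerivation j).isWeightFiltration (w * j)

theorem IsWeightFiltration.extPowerMap_one_add_sub_one [CharZero F] [FiniteDimensional F V]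
    (hj : 0 < j) {n : Module.End F V} {w : ℤ} (h : IsWeightFiltration n w W) :
    IsWeightFiltration (exteriorPower.map j (1 + n) - 1) (w * j) (extPowerFiltration F j W) :=
  (h.extPowerDerivation hj).of_sub_map_le
    (map_sub_one_sub_extPowerDerivation_map_le hj h.monotone h.map_le_sub_two)

end ExteriorPowerFiltration

section Semisimple

variable {F V V' : Type*} [Field F] [AddCommGroup V] [Module F V]
  [AddCommGroup V'] [Module F V']

theorem eq_sub_of_isNilpotent_sub [PerfectField F] [FiniteDimensional F V]
    {a s t p : Module.End F V} (hs : s.IsSemisimple) (has : IsNilpotent (a - s))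
    (hsa : Commute s a) (ht : t.IsSemisimple) (hp : IsNilpotent p) (htp : Commute t p)
    (ha : a = t + p) : p = a - s :=
  (Module.End.isNilpotent_isSemisimple_unique hp ht has hs htp.symm
    (hsa.sub_right (Commute.refl s)).symm (by rw [sub_add_cancel, ha, add_comm])).1

theorem isSemisimple_of_surjective_of_comp_eq_comp [FiniteDimensional F V]
    {S : Module.End F V} {T : Module.End F V'} (hS : S.IsSemisimple) {π : V →ₗ[F] V'}
    (hπ : Function.Surjective π) (hST : π ∘ₗ S = T ∘ₗ π) : T.IsSemisimple := by
  refine Module.End.isSemisimple_of_squarefree_aeval_eq_zero hS.minpoly_squarefree ?_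
  have aeval_comp (p : Polynomial F) :
      π ∘ₗ Polynomial.aeval S p = Polynomial.aeval T p ∘ₗ π := by
    ext x
    have pow_comp (k : ℕ) : π ((S ^ k) x) = (T ^ k) (π x) :=
      LinearMap.congr_fun (Module.End.commute_pow_left_of_commute hST.symm k).symm x
    simp [Polynomial.aeval_eq_sum_range, pow_comp]
  refine LinearMap.ext fun y ↦ ?_
  obtain ⟨x, rfl⟩ := hπ y
  simpa using (LinearMap.congr_fun (aeval_comp (minpoly F S)) x).symm

theorem isSemisimple_rTensor [FiniteDimensional F V] {a : Module.End F V} (ha : a.IsSemisimple) :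
    Module.End.IsSemisimple (a.rTensor V') := by
  refine Module.End.isSemisimple_of_squarefree_aeval_eq_zero ha.minpoly_squarefree ?_
  have h := Polynomial.aeval_algHom_apply (Module.End.rTensorAlgHom F V V') a (minpoly F a)
  rwa [minpoly.aeval, map_zero] at h

theorem isSemisimple_lTensor [FiniteDimensional F V] {a : Module.End F V} (ha : a.IsSemisimple) :
    Module.End.IsSemisimple (a.lTensor V') := by
  refine Module.End.isSemisimple_of_squarefree_aeval_eq_zero ha.minpoly_squarefree ?_
  have h := Polynomial.aeval_algHom_apply (Module.End.lTensorAlgHom F V V') a (minpoly F a)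
  rwa [minpoly.aeval, map_zero] at h

theorem isSemisimple_tensorProduct_map [PerfectField F] [FiniteDimensional F V]
    [FiniteDimensional F V'] {a : Module.End F V} {b : Module.End F V'} (ha : a.IsSemisimple)
    (hb : b.IsSemisimple) : Module.End.IsSemisimple (TensorProduct.map a b) := by
  have rTensor_commute_lTensor : Commute (a.rTensor V') (b.lTensor V) :=
    (LinearMap.rTensor_comp_lTensor ..).trans (LinearMap.lTensor_comp_rTensor ..).symm
  rw [← LinearMap.rTensor_comp_lTensor]
  exact (isSemisimple_rTensor ha).mul_of_commute rTensor_commute_lTensor (isSemisimple_lTensor hb)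

open TensorProduct in
/-- The multiplication map `v ⊗ x ↦ v ∧ x` of the exterior algebra in degrees `1` and `j`. -/
noncomputable def tensorToExtPowerSucc (F V : Type*) [Field F] [AddCommGroup V] [Module F V]
    (j : ℕ) : V ⊗[F] ⋀[F]^j V →ₗ[F] ⋀[F]^(j + 1) V :=
  TensorProduct.lift (exteriorPower.alternatingMapLinearEquiv.toLinearMap ∘ₗ
    (exteriorPower.ιMulti F (j + 1)).curryLeft)

theorem tensorToExtPowerSucc_tmul_ιMulti (j : ℕ) (x : V) (v : Fin j → V) :
    tensorToExtPowerSucc F V j (x ⊗ₜ exteriorPower.ιMulti F j v) =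
      exteriorPower.ιMulti F (j + 1) (Matrix.vecCons x v) := by
  simp [tensorToExtPowerSucc]

theorem tensorToExtPowerSucc_surjective (j : ℕ) :
    Function.Surjective (tensorToExtPowerSucc F V j) := by
  rw [← LinearMap.range_eq_top, eq_top_iff, ← exteriorPower.ιMulti_span, Submodule.span_le]
  rintro _ ⟨v, rfl⟩
  refine ⟨v 0 ⊗ₜ exteriorPower.ιMulti F j (Fin.tail v), ?_⟩
  rw [tensorToExtPowerSucc_tmul_ιMulti]
  exact congrArg _ (Fin.cons_self_tail v)

theorem tensorToExtPowerSucc_comp_map (j : ℕ) (a : Module.End F V) :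
    tensorToExtPowerSucc F V j ∘ₗ TensorProduct.map a (exteriorPower.map j a) =
      exteriorPower.map (j + 1) a ∘ₗ tensorToExtPowerSucc F V j := by
  refine TensorProduct.ext (LinearMap.ext fun x ↦ exteriorPower.linearMap_ext
    (AlternatingMap.ext fun v ↦ ?_))
  change tensorToExtPowerSucc F V j (a x ⊗ₜ exteriorPower.map j a (exteriorPower.ιMulti F j v)) =
    exteriorPower.map (j + 1) a (tensorToExtPowerSucc F V j (x ⊗ₜ exteriorPower.ιMulti F j v))
  simp only [exteriorPower.map_apply_ιMulti, tensorToExtPowerSucc_tmul_ιMulti]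
  exact congrArg _ (Fin.comp_cons a x v).symm

theorem isSemisimple_exteriorPower_map [PerfectField F] [FiniteDimensional F V]
    {a : Module.End F V} (ha : a.IsSemisimple) (j : ℕ) :
    Module.End.IsSemisimple (exteriorPower.map j a) := by
  induction j with
  | zero =>
    have map_zero : exteriorPower.map 0 a = LinearMap.id := by
      refine exteriorPower.linearMap_ext (AlternatingMap.ext fun v ↦ ?_)
      rw [LinearMap.compAlternatingMap_apply, exteriorPower.map_apply_ιMulti,
        Subsingleton.elim (a ∘ v) v]
      rfl
    rw [map_zero]
    exact Module.End.isSemisimple_id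
  | succ j ih =>
    exact isSemisimple_of_surjective_of_comp_eq_comp (isSemisimple_tensorProduct_map ha ih)
      (tensorToExtPowerSucc_surjective j) (tensorToExtPowerSucc_comp_map j a)

end Semisimple

section ExteriorPowerMap

/-- The action of the monoid of endomorphisms of `M` on `⋀[R]^j M`: `exteriorPower.map j` as a
monoid homomorphism. -/
noncomputable def extPowerMapHom {R M : Type*} [CommRing R] [AddCommGroup M] [Module R M] (j : ℕ) :
    Module.End R M →* Module.End R (⋀[R]^j M) where
  toFun a := exteriorPower.map j a
  map_one' := exteriorPower.map_id
  map_mul' a b := by simp only [Module.End.mul_eq_comp, exteriorPower.map_comp]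

theorem IsWeightFiltration.extPowerMap_add_sub {F V : Type*} [Field F] [CharZero F]
    [AddCommGroup V] [Module F V] [FiniteDimensional F V] {j : ℕ} (hj : 0 < j)
    {s n : Module.End F V} (hs : IsUnit s) (hsn : Commute s n) {w : ℤ} {W : ℤ → Submodule F V}
    (h : IsWeightFiltration n w W) :
    IsWeightFiltration (exteriorPower.map j (s + n) - exteriorPower.map j s) (w * j)
      (extPowerFiltration F j W) := by
  obtain ⟨u, rfl⟩ := hs
  let n' : Module.End F V := (u⁻¹ : (Module.End F V)ˣ) * n
  have hn' : IsWeightFiltration n' w W := h.unit_mul hsn.units_inv_left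
  have mul_one_add : (u : Module.End F V) * (1 + n') = u + n := by
    simp only [n', mul_add, mul_one, Units.mul_inv_cancel_left]
  have hun' : Commute (u : Module.End F V) (1 + n') :=
    (Commute.one_right _).add_right ((Commute.refl _).units_inv_right.mul_right hsn)
  have hcomm : Commute (extPowerMapHom j (u : Module.End F V)) (extPowerMapHom j (1 + n') - 1) :=
    Commute.sub_right (R := Module.End F (⋀[F]^j V)) (hun'.map (extPowerMapHom j))
      (Commute.one_right _)
  have h_mul := (hn'.extPowerMap_one_add_sub_one hj).unit_mul
    (u := Units.map (extPowerMapHom j) u) hcomm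
  convert h_mul using 1
  change extPowerMapHom j ((u : Module.End F V) + n) - extPowerMapHom j (u : Module.End F V) =
    extPowerMapHom j (u : Module.End F V) * (extPowerMapHom j (1 + n') - 1)
  rw [← mul_one_add, map_mul]
  exact (mul_sub_one (α := Module.End F (⋀[F]^j V)) _ _).symm

end ExteriorPowerMap

/-- Let `M` be an automorphism of a finite dimensional vector space `V` over a field of
characteristic zero, with Jordan–Chevalley decomposition `M = Ms + Mn`, and let `W` be the
weight filtration centered at `w` associated to `Mn`. Fix `j > 0` and let `Mj = ∧^j M` be
the endomorphism of `⋀^j V` induced by `M` (determined by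
`Mj (v₁ ∧ ⋯ ∧ v_j) = M v₁ ∧ ⋯ ∧ M v_j`). If `∧^j M = T + P` is a Jordan–Chevalley
decomposition (`T` semisimple, `P` nilpotent, commuting), then the weight filtration on
`⋀^j V` centered at `w · j` associated to `P` is the exterior power filtration `∧^j W`. -/
theorem weightFiltration_exteriorPower_jordanChevalley
    (F V : Type*) [Field F] [CharZero F] [AddCommGroup V] [Module F V]
    [FiniteDimensional F V]
    (M Ms Mn : V →ₗ[F] V) (hMbij : Function.Bijective M)
    (hM : M = Ms + Mn) (hMs : Module.End.IsSemisimple Ms) (hMn : IsNilpotent Mn)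
    (hMc : Commute Ms Mn)
    (w : ℤ) (W : ℤ → Submodule F V) (hW : IsWeightFiltration Mn w W)
    (j : ℕ) (hj : 0 < j)
    (Mj : ⋀[F]^j V →ₗ[F] ⋀[F]^j V)
    (hMj : ∀ v : Fin j → V, Mj (wedge F j v) = wedge F j fun k => M (v k))
    (T P : ⋀[F]^j V →ₗ[F] ⋀[F]^j V) (hTP : Mj = T + P)
    (hT : Module.End.IsSemisimple T) (hP : IsNilpotent P) (hTPc : Commute T P) :
    IsWeightFiltration P (w * j) (extPowerFiltration F j W) := by
  have hMs_unit : IsUnit Ms := by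
    have hM_unit : IsUnit (Ms + Mn) := hM ▸ (Module.End.isUnit_iff M).2 hMbij
    rw [← add_neg_cancel_right Ms Mn]
    exact hMn.neg.isUnit_add_left_of_commute hM_unit
      (hMc.symm.add_right (Commute.refl Mn)).neg_left
  have hMj_eq : Mj = exteriorPower.map j M :=
    exteriorPower.linearMap_ext <| AlternatingMap.ext fun v ↦ by
      rw [LinearMap.compAlternatingMap_apply, LinearMap.compAlternatingMap_apply,
        exteriorPower.map_apply_ιMulti]
      exact hMj v
  have hN := hW.extPowerMap_add_sub hj hMs_unit hMc
  have map_commute : Commute (exteriorPower.map j Ms) (exteriorPower.map j (Ms + Mn)) :=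
    ((Commute.refl Ms).add_right hMc).map (extPowerMapHom j)
  have hP_eq := eq_sub_of_isNilpotent_sub (isSemisimple_exteriorPower_map hMs j) hN.isNilpotent
    map_commute hT hP hTPc (by rw [← hTP, hMj_eq, hM])
  rwa [hP_eq]
end

section
/- Let F be an algebraically closed field of characteristic zero, V ≠ 0 a finite-dimensional F-vector space, and M an automorphism of V. Suppose V = V₁ ⊕ ⋯ ⊕ V_q with each V_i M-stable and the restriction of M to V_i a single Jordan block of size m_i with eigenvalue ξ_i ∈ F× (i.e. (M|_{V_i} − ξ_i·id)^{m_i} = 0 and (M|_{V_i} − ξ_i·id)^{m_i−1} ≠ 0, dim V_i = m_i). Fix an integer j > 0, and let 𝒮 be the set of tuples s ∈ ℕ^q with s₁ + ⋯ + s_q = j and s_i ≤ m_i for all i. For ζ ∈ F, let max_ζ denote the smallest k ∈ ℕ such that ker((∧^j M − ζ·id)^{k+1}) = ker((∧^j M − ζ·id)^k) (this is the maximal rank of a Jordan block of ∧^j M with eigenvalue ζ, and equals 0 if ζ is not an eigenvalue of ∧^j M). Then for every ζ ∈ F, max_ζ = max{ 1 + Σ_{i=1}^{q} s_i(m_i −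 s_i) : s ∈ 𝒮 and ∏_{i=1}^{q} ξ_i^{s_i} = ζ }, with the convention max ∅ = 0. -/
/-!
Rescaling a Jordan basis so that `M v = ξᵢ (v + v')`, with `v'` the successor of `v` in its chain,
makes `V` a representation of `sl₂` whose lowering operator `f` sends `v` to `v'`. On a wedge of
chain vectors with product of eigenvalues `ζ`, the map `⋀^j M - ζ` equals `ζ • f`, with `f` acting
on `⋀^j V` as a derivation, up to terms that lower the `sl₂`-weight by at least four.

The wedges with product `ζ` that take `sᵢ` vectors from the `i`-th chain have weights between
`-∑ sᵢ (mᵢ - sᵢ)` and `∑ sᵢ (mᵢ - sᵢ)`. If `k` is the maximum of these sums, then `⋀^j M - ζ`, which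
lowers weights by at least two, vanishes to the power `k + 1` on the generalized eigenspace of `ζ`.
On a highest weight vector of weight `k`, its `k`-th power is `ζ ^ k • f ^ k`, and this is nonzero
by the representation theory of `sl₂` in characteristic zero.
-/

open Module exteriorPower Finset

lemma linearIndependent_pow_apply {R W : Type*} [Ring R] [IsDomain R] [AddCommGroup W] [Module R W]
    [IsTorsionFree R W] {N : End R W} {x : W} {m : ℕ} (hm : (N ^ m) x = 0)
    (hm' : (N ^ (m - 1)) x ≠ 0) :
    LinearIndependent R fun a : Fin m ↦ (N ^ (a : ℕ)) x := by
  rw [Fintype.linearIndependent_iff]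
  intro g hg ⟨n, hn⟩
  induction n using Nat.strong_induction_on with
  | _ n ih =>
    have hsum := congrArg (N ^ (m - 1 - n)) hg
    rw [map_sum, map_zero, sum_eq_single ⟨n, hn⟩ ?_ (by simp), map_smul, ← End.mul_apply,
      ← pow_add, Nat.sub_add_cancel (by lia)] at hsum
    · exact (smul_eq_zero.1 hsum).resolve_right hm'
    · rintro ⟨a, ha⟩ - hne
      rcases lt_or_gt_of_ne (Fin.val_ne_of_ne hne) with hlt | hgt
      · rw [ih a hlt ha, zero_smul, map_zero]
      · rw [map_smul, ← End.mul_apply, ← pow_add,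
          End.pow_map_zero_of_le (by grind) hm, smul_zero]

section Filtration

variable {R W : Type*} [CommRing R] [AddCommGroup W] [Module R W] {G : ℤ → Submodule R W} {d d' : ℤ}
  {T D : End R W}

lemma filtration_le_comap_pow (hT : ∀ x, G x ≤ (G (x - d)).comap T) (x : ℤ) (k : ℕ) :
    G x ≤ (G (x - k * d)).comap (T ^ k) := by
  induction k with
  | zero => exact fun z hz ↦ by simpa using hz
  | succ k ih =>
    intro z hz
    have hTz : T ((T ^ k) z) ∈ G (x - k * d - d) := hT _ (ih hz)
    rw [Submodule.mem_comap, pow_succ', End.mul_apply]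
    convert hTz using 2
    push_cast
    ring

lemma filtration_le_comap_of_leading_term (hG : Monotone G) (hd' : 0 ≤ d') {c : R}
    (hD : ∀ x, G x ≤ (G (x - d)).comap D) (hTD : ∀ x, G x ≤ (G (x - d - d')).comap (T - c • D))
    (x : ℤ) : G x ≤ (G (x - d)).comap T := by
  intro z hz
  rw [Submodule.mem_comap, ← sub_add_cancel (T z) (c • D z)]
  exact add_mem (hG (by lia) (hTD x hz)) (Submodule.smul_mem _ c (hD x hz))

lemma filtration_le_comap_pow_sub_smul_pow (hG : Monotone G) (hd' : 0 ≤ d') {c : R}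
    (hD : ∀ x, G x ≤ (G (x - d)).comap D) (hTD : ∀ x, G x ≤ (G (x - d - d')).comap (T - c • D))
    (x : ℤ) (k : ℕ) : G x ≤ (G (x - k * d - d')).comap (T ^ k - c ^ k • D ^ k) := by
  induction k with
  | zero => simp
  | succ k ih =>
    intro z hz
    have hT := filtration_le_comap_of_leading_term hG hd' hD hTD
    have hlead : T ((T ^ k - c ^ k • D ^ k) z) ∈ G (x - k * d - d' - d) := hT _ (ih hz)
    have herr : c ^ k • (T - c • D) ((D ^ k) z) ∈ G (x - k * d - d - d') :=
      Submodule.smul_mem _ _ (hTD _ (filtration_le_comap_pow hD x k hz))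
    have htelescope : (T ^ (k + 1) - c ^ (k + 1) • D ^ (k + 1)) z =
        T ((T ^ k - c ^ k • D ^ k) z) + c ^ k • (T - c • D) ((D ^ k) z) := by
      simp only [LinearMap.sub_apply, LinearMap.smul_apply, pow_succ', End.mul_apply, map_sub,
        map_smul, smul_sub, mul_smul]
      rw [smul_comm c]
      abel
    rw [Submodule.mem_comap, htelescope]
    convert add_mem hlead (sub_right_comm (x - k * d) d d' ▸ herr) using 2
    push_cast
    ring

end Filtration

lemma isLeast_ker_pow_succ_eq {K W : Type*} [DivisionRing K] [AddCommGroup W] [Module K W]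
    {T : End K W} {N : ℕ} (hker : ∀ k, LinearMap.ker (T ^ k) ≤ LinearMap.ker (T ^ N))
    (hne : ∀ k, N = k + 1 → LinearMap.ker (T ^ N) ≠ LinearMap.ker (T ^ k)) :
    IsLeast {k | LinearMap.ker (T ^ (k + 1)) = LinearMap.ker (T ^ k)} N := by
  refine ⟨le_antisymm (hker _) (T.iterateKer.monotone N.le_succ), fun k hk ↦ ?_⟩
  by_contra! hkN
  have hconst := End.ker_pow_constant (Eq.symm hk)
  apply hne (N - 1) (by lia)
  rw [show N = k + (N - k) by lia, ← hconst, show k + (N - k) - 1 = k + (N - k - 1) by lia,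
    ← hconst]

section ExteriorSl2

attribute [local instance] LieRing.ofAssociativeRing

lemma pow_apply_ne_zero_of_sl2_relations {R W : Type*} [CommRing R] [IsDomain R] [CharZero R]
    [AddCommGroup W] [Module R W] [IsTorsionFree R W] {h e f : End R W} (hef : ⁅e, f⁆ = h)
    (hhe : ⁅h, e⁆ = 2 • e) (hhf : ⁅h, f⁆ = -(2 • f)) {v : W} {n : ℕ} (hv : v ≠ 0) (hev : e v = 0)
    (hhv : h v = (n : R) • v) : (f ^ n) v ≠ 0 := by
  rcases Nat.eq_zero_or_pos n with rfl | hn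
  · simpa using hv
  have hne : h ≠ 0 := by
    rintro rfl
    exact smul_ne_zero (Nat.cast_ne_zero.2 hn.ne') hv hhv.symm
  have t : IsSl2Triple h e f := ⟨hne, hef, hhe, hhf⟩
  have P : t.HasPrimitiveVectorWith v (n : R) := ⟨hv, hhv, hev⟩
  simpa using P.pow_toEnd_f_ne_zero_of_eq_nat rfl le_rfl

section Derivation

variable {R M N ι : Type*} [CommRing R] [AddCommGroup M] [Module R M] [AddCommGroup N] [Module R N]
  [DecidableEq ι]

lemma update_id_apply (A : End R M) (v : ι → M) (l : ι) :
    (fun k ↦ Function.update (fun _ ↦ LinearMap.id) l A k (v k)) =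
      Function.update v l (A (v l)) := by
  ext k
  rcases eq_or_ne k l with rfl | hkl <;> simp [*]

variable [Fintype ι]

lemma sum_map_update_eq_zero_of_eq (g : M [⋀^ι]→ₗ[R] N) (A : End R M) {v : ι → M} {i k : ι}
    (hv : v i = v k) (hik : i ≠ k) : ∑ l, g (Function.update v l (A (v l))) = 0 := by
  have hswap : Function.update v k (A (v k)) = Function.update v i (A (v i)) ∘ Equiv.swap i k := by
    ext l
    rcases eq_or_ne l i with rfl | hli
    · simp [hik, hik.symm, hv]
    rcases eq_or_ne l k with rfl | hlk
    · simp [hv]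
    · simp [Equiv.swap_apply_of_ne_of_ne hli hlk, hli, hlk]
  have hother : ∀ l, l ≠ i ∧ l ≠ k → g (Function.update v l (A (v l))) = 0 := fun l hl ↦
    g.map_eq_zero_of_eq _ (by simp [hl.1.symm, hl.2.symm, hv]) hik
  rw [Fintype.sum_eq_add i k hik hother, hswap, g.map_swap _ hik, add_neg_cancel]

lemma sum_map_update_lie (g : M [⋀^ι]→ₗ[R] N) (A B : End R M) (v : ι → M) :
    ∑ l, g (Function.update v l (⁅A, B⁆ (v l))) =
      ∑ l, ∑ k, g (Function.update (Function.update v l (B (v l))) k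
        (A (Function.update v l (B (v l)) k))) -
      ∑ l, ∑ k, g (Function.update (Function.update v l (A (v l))) k
        (B (Function.update v l (A (v l)) k))) := by
  -- Terms acting in two different slots cancel in pairs; the diagonal terms give the bracket.
  have hterm (l k : ι) :
      g (Function.update (Function.update v l (B (v l))) k (A (Function.update v l (B (v l)) k))) -
      g (Function.update (Function.update v k (A (v k))) l (B (Function.update v k (A (v k)) l))) =
      if k = l then g (Function.update v l (⁅A, B⁆ (v l))) else 0 := by
    split_ifs with hkl
    · subst hkl
      simp [Ring.lie_def, g.map_update_sub]
    · rw [Function.update_of_ne hkl, Function.update_of_ne (Ne.symm hkl),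
        Function.update_comm hkl, sub_self]
  rw [sum_comm (f := fun l k ↦ g (Function.update (Function.update v l (A (v l))) k _)),
    ← sum_sub_distrib]
  simp only [← sum_sub_distrib, hterm, sum_ite_eq', mem_univ, if_true]

/-- The infinitesimal action of an endomorphism `A` on an alternating map `g`: the sum over all
slots of `g` with `A` applied in that slot. -/
def alternatingDerivation (g : M [⋀^ι]→ₗ[R] N) (A : End R M) : M [⋀^ι]→ₗ[R] N where
  toMultilinearMap := ∑ l, g.toMultilinearMap.compLinearMap
    (Function.update (fun _ ↦ LinearMap.id) l A)
  map_eq_zero_of_eq' v i k hv hik := by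
    simpa [update_id_apply] using sum_map_update_eq_zero_of_eq g A hv hik

lemma alternatingDerivation_apply (g : M [⋀^ι]→ₗ[R] N) (A : End R M) (v : ι → M) :
    alternatingDerivation g A v = ∑ l, g (Function.update v l (A (v l))) := by
  simp [alternatingDerivation, ← AlternatingMap.coe_multilinearMap, update_id_apply]

/-- The Lie algebra action of `End R M` on `⋀[R]^n M` by derivations,
`A (v₁ ∧ ⋯ ∧ vₙ) = ∑ₗ v₁ ∧ ⋯ ∧ A vₗ ∧ ⋯ ∧ vₙ`. -/
noncomputable def exteriorPowerDerivation (n : ℕ) : End R M →ₗ⁅R⁆ End R (⋀[R]^n M) where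
  toFun A := alternatingMapLinearEquiv (alternatingDerivation (ιMulti R n) A)
  map_add' A B := by
    ext v
    simp [alternatingDerivation_apply, sum_add_distrib]
  map_smul' r A := by
    ext v
    simp [alternatingDerivation_apply, smul_sum]
  map_lie' {A B} := by
    ext v
    simpa only [alternatingMapLinearEquiv_apply_ιMulti, alternatingDerivation_apply,
      LinearMap.compAlternatingMap_apply, Ring.lie_def, LinearMap.sub_apply, End.mul_apply,
      map_sum] using congrArg Subtype.val (sum_map_update_lie (ιMulti R n) A B v)

lemma exteriorPowerDerivation_apply_ιMulti (n : ℕ) (A : End R M) (v : Fin n → M) :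
    exteriorPowerDerivation n A (ιMulti R n v) =
      ∑ l, ιMulti R n (Function.update v l (A (v l))) :=
  (alternatingMapLinearEquiv_apply_ιMulti _ _).trans (alternatingDerivation_apply _ _ _)

end Derivation

section Chains

variable {R V ι : Type*} [CommRing R] [AddCommGroup V] [Module R V] {m : ι → ℕ}
  (b : Basis (Σ i, Fin (m i)) R V)

/-- The vector in position `p.2` of the `p.1`-th chain of a basis made of chains of lengths `m i`.
Positions past the end of the chain carry the zero vector. -/
noncomputable def chainVec (p : ι × ℕ) : V :=
  if h : p.2 < m p.1 then b ⟨p.1, p.2, h⟩ else 0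

lemma chainVec_of_le {i : ι} {a : ℕ} (h : m i ≤ a) : chainVec b (i, a) = 0 :=
  dif_neg h.not_gt

lemma chainVec_coe_fin (p : Σ i, Fin (m i)) : chainVec b (p.1, p.2) = b p :=
  dif_pos p.2.2

lemma chainVec_end_ext {A B : End R V} (h : ∀ p, A (chainVec b p) = B (chainVec b p)) : A = B :=
  b.ext fun p ↦ by simpa only [chainVec_coe_fin] using h (p.1, p.2)

lemma constr_chainVec (φ : ι × ℕ → V) (hφ : ∀ i a, m i ≤ a → φ (i, a) = 0) (p : ι × ℕ) :
    b.constr R (fun q ↦ φ (q.1, q.2)) (chainVec b p) = φ p := by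
  obtain ⟨i, a⟩ := p
  rcases lt_or_ge a (m i) with ha | ha
  · exact (congrArg _ (chainVec_coe_fin b ⟨i, a, ha⟩)).trans (b.constr_basis R _ _)
  · rw [chainVec_of_le b ha, map_zero, hφ i a ha]

/-- The `sl₂`-weight of the vector in position `p.2` of the `p.1`-th chain: along a chain of
length `n` the weights are `n - 1, n - 3, …, 1 - n`. -/
def chainWeight (m : ι → ℕ) (p : ι × ℕ) : ℤ := m p.1 - 1 - 2 * p.2

/-- The lowering operator of the `sl₂`-triple attached to a basis made of chains. -/
noncomputable def lowerEnd : End R V :=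
  b.constr R fun q ↦ chainVec b (q.1, q.2 + 1)

/-- The raising operator of the `sl₂`-triple attached to a basis made of chains. At the top of a
chain, where `a - 1` is truncated, the coefficient `a * (m i - a)` vanishes. -/
noncomputable def raiseEnd : End R V :=
  b.constr R fun q ↦ ((q.2 : R) * (m q.1 - q.2)) • chainVec b (q.1, q.2 - 1)

/-- The weight operator of the `sl₂`-triple attached to a basis made of chains. -/
noncomputable def weightEnd : End R V :=
  b.constr R fun q ↦ (chainWeight m (q.1, q.2) : R) • chainVec b (q.1, q.2)

lemma lowerEnd_chainVec (p : ι × ℕ) : lowerEnd b (chainVec b p) = chainVec b (p.1, p.2 + 1) :=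
  constr_chainVec b (fun p ↦ chainVec b (p.1, p.2 + 1))
    (fun _ _ h ↦ chainVec_of_le b (h.trans (Nat.le_succ _))) p

lemma raiseEnd_chainVec (p : ι × ℕ) :
    raiseEnd b (chainVec b p) = ((p.2 : R) * (m p.1 - p.2)) • chainVec b (p.1, p.2 - 1) := by
  refine constr_chainVec b (fun p ↦ ((p.2 : R) * (m p.1 - p.2)) • chainVec b (p.1, p.2 - 1))
    (fun i a h ↦ ?_) p
  rcases h.eq_or_lt with rfl | h
  · simp
  · simp only [chainVec_of_le b (Nat.le_sub_one_of_lt h), smul_zero]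

lemma weightEnd_chainVec (p : ι × ℕ) :
    weightEnd b (chainVec b p) = (chainWeight m p : R) • chainVec b p :=
  constr_chainVec b (fun p ↦ (chainWeight m p : R) • chainVec b p)
    (fun _ _ h ↦ by simp only [chainVec_of_le b h, smul_zero]) p

lemma lie_raiseEnd_lowerEnd : ⁅raiseEnd b, lowerEnd b⁆ = weightEnd b := by
  refine chainVec_end_ext b fun ⟨i, a⟩ ↦ ?_
  simp only [Ring.lie_def, LinearMap.sub_apply, End.mul_apply, lowerEnd_chainVec,
    raiseEnd_chainVec, weightEnd_chainVec, map_smul, chainWeight]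
  rcases a with _ | a
  · simp
  · rw [Nat.add_sub_cancel, Nat.add_sub_cancel, ← sub_smul]
    congr 1
    push_cast
    ring

lemma lie_weightEnd_raiseEnd : ⁅weightEnd b, raiseEnd b⁆ = 2 • raiseEnd b := by
  refine chainVec_end_ext b fun ⟨i, a⟩ ↦ ?_
  simp only [Ring.lie_def, LinearMap.sub_apply, End.mul_apply, LinearMap.smul_apply,
    raiseEnd_chainVec, weightEnd_chainVec, map_smul, chainWeight]
  rcases a with _ | a
  · simp
  · rw [Nat.add_sub_cancel]
    push_cast
    module

lemma lie_weightEnd_lowerEnd : ⁅weightEnd b, lowerEnd b⁆ = -(2 • lowerEnd b) := by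
  refine chainVec_end_ext b fun ⟨i, a⟩ ↦ ?_
  simp only [Ring.lie_def, LinearMap.sub_apply, End.mul_apply, LinearMap.smul_apply,
    LinearMap.neg_apply, lowerEnd_chainVec, weightEnd_chainVec, map_smul, chainWeight]
  push_cast
  module

end Chains

section JordanBasis

/-- The basis `b`, made of chains of lengths `m i`, is a Jordan basis of `M` in which the nilpotent
part on the `i`-th chain is rescaled by `ξ i`: each chain vector `v` with successor `w` satisfies
`M v = ξ i • (v + w)`. The rescaling makes the induced map on exterior powers expand with a single
coefficient `∏ ξ`. -/
def IsNormalizedJordanBasis {R V ι : Type*} [CommRing R] [AddCommGroup V] [Module R V] {m : ι → ℕ}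
    (M : End R V) (ξ : ι → R) (b : Basis (Σ i, Fin (m i)) R V) : Prop :=
  ∀ p : ι × ℕ, M (chainVec b p) = ξ p.1 • (chainVec b p + chainVec b (p.1, p.2 + 1))

variable {K V ι : Type*} [Field K] [AddCommGroup V] [Module K V]

lemma exists_basis_coe_eq_pow_apply {U : Submodule K V} {N : End K V} (hN : ∀ x ∈ U, N x ∈ U)
    {m : ℕ} (hU : finrank K U = m) {x : V} (hx : x ∈ U) (hm : (N ^ m) x = 0)
    (hm' : (N ^ (m - 1)) x ≠ 0) : ∃ B : Basis (Fin m) K U, ∀ a, (B a : V) = (N ^ (a : ℕ)) x := by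
  have hmem (a : ℕ) : (N ^ a) x ∈ U := Module.End.pow_apply_mem_of_forall_mem a hN x hx
  have hli : LinearIndependent K fun a : Fin m ↦ (⟨(N ^ (a : ℕ)) x, hmem a⟩ : U) :=
    .of_comp U.subtype (linearIndependent_pow_apply hm hm')
  have hmpos : m ≠ 0 := by
    rintro rfl
    exact hm' hm
  have : NeZero m := ⟨hmpos⟩
  exact ⟨basisOfLinearIndependentOfCardEqFinrank hli (by simp [hU]), by simp⟩

variable [DecidableEq ι] {m : ι → ℕ} {ξ : ι → K} {M : End K V}

lemma exists_isNormalizedJordanBasis {U : ι → Submodule K V} (hdec : DirectSum.IsInternal U)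
    (hξ : ∀ i, ξ i ≠ 0) (hdim : ∀ i, finrank K (U i) = m i) (hstab : ∀ i, ∀ x ∈ U i, M x ∈ U i)
    (hnil : ∀ i, ∀ x ∈ U i, ((M - ξ i • LinearMap.id : End K V) ^ m i) x = 0)
    (hnil' : ∀ i, ∃ x ∈ U i, ((M - ξ i • LinearMap.id : End K V) ^ (m i - 1)) x ≠ 0) :
    ∃ b : Basis (Σ i, Fin (m i)) K V, IsNormalizedJordanBasis M ξ b := by
  choose x hx hx' using hnil'
  let N (i : ι) : End K V := (ξ i)⁻¹ • (M - ξ i • LinearMap.id)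
  have hMN (i : ι) (v : V) : M v = ξ i • (v + N i v) := by
    simp [N, smul_smul, hξ i]
  have hNstab (i : ι) : ∀ v ∈ U i, N i v ∈ U i := fun v hv ↦
    (U i).smul_mem _ (sub_mem (hstab i v hv) ((U i).smul_mem _ hv))
  have hNx (i : ι) : (N i ^ m i) (x i) = 0 := by
    rw [smul_pow, LinearMap.smul_apply, hnil i _ (hx i), smul_zero]
  have hNx' (i : ι) : (N i ^ (m i - 1)) (x i) ≠ 0 := by
    rw [smul_pow, LinearMap.smul_apply]
    exact smul_ne_zero (pow_ne_zero _ (inv_ne_zero (hξ i))) (hx' i)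
  choose B hB using fun i ↦
    exists_basis_coe_eq_pow_apply (hNstab i) (hdim i) (hx i) (hNx i) (hNx' i)
  have hchain (p : ι × ℕ) : chainVec (hdec.collectedBasis B) p = (N p.1 ^ p.2) (x p.1) := by
    obtain ⟨i, a⟩ := p
    rcases lt_or_ge a (m i) with ha | ha
    · exact (chainVec_coe_fin _ ⟨i, a, ha⟩).trans (by simp [hB])
    · rw [chainVec_of_le _ ha, End.pow_map_zero_of_le ha (hNx i)]
  refine ⟨hdec.collectedBasis B, fun p ↦ ?_⟩
  rw [hchain, hchain, hMN, pow_succ', End.mul_apply]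

end JordanBasis

lemma sum_finset_eq_add_sum_singleton_add {α N : Type*} [Fintype α] [AddCommMonoid N]
    (g : Finset α → N) :
    ∑ S, g S = g ∅ + ∑ a, g {a} + ∑ S with 2 ≤ #S, g S := by
  have hsmall : ({S : Finset α | ¬ 2 ≤ #S} : Finset (Finset α)) =
      cons ∅ (univ.map ⟨singleton, singleton_injective⟩) (by simp) := by
    ext S
    simp only [mem_filter_univ, mem_cons, mem_map, mem_univ, true_and, Function.Embedding.coeFn_mk,
      eq_comm (b := S), ← card_eq_zero, ← card_eq_one]
    lia
  rw [← sum_filter_not_add_sum_filter univ (2 ≤ #·), hsmall, sum_cons, sum_map]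
  rfl

section ChainWedges

variable {R V ι : Type*} [CommRing R] [AddCommGroup V] [Module R V] {m : ι → ℕ} {j : ℕ}

/-- The wedge `v₁ ∧ ⋯ ∧ v_j` of the chain vectors with positions `c 1, …, c j`. -/
noncomputable def chainWedge (b : Basis (Σ i, Fin (m i)) R V) (c : Fin j → ι × ℕ) : ⋀[R]^j V :=
  ιMulti R j fun l ↦ chainVec b (c l)

/-- The `sl₂`-weight of a wedge of chain vectors. -/
def wedgeWeight (m : ι → ℕ) (c : Fin j → ι × ℕ) : ℤ := ∑ l, chainWeight m (c l)

/-- Move the positions `c l` with `l ∈ S` one step down their chains. -/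
def shiftOn (S : Finset (Fin j)) (c : Fin j → ι × ℕ) : Fin j → ι × ℕ :=
  S.piecewise (fun l ↦ ((c l).1, (c l).2 + 1)) c

lemma shiftOn_empty (c : Fin j → ι × ℕ) : shiftOn ∅ c = c := piecewise_empty _ _

lemma shiftOn_fst (S : Finset (Fin j)) (c : Fin j → ι × ℕ) (l : Fin j) :
    (shiftOn S c l).1 = (c l).1 := by
  by_cases hl : l ∈ S <;> simp [shiftOn, hl]

lemma wedgeWeight_shiftOn (S : Finset (Fin j)) (c : Fin j → ι × ℕ) :
    wedgeWeight m (shiftOn S c) = wedgeWeight m c - 2 * #S := by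
  have hterm (l : Fin j) :
      chainWeight m (shiftOn S c l) = chainWeight m (c l) - if l ∈ S then 2 else 0 := by
    by_cases hl : l ∈ S <;> simp [shiftOn, hl, chainWeight]
    ring
  simp only [wedgeWeight, hterm, sum_sub_distrib, sum_ite_mem, univ_inter, sum_const, nsmul_eq_mul]
  ring

variable {b : Basis (Σ i, Fin (m i)) R V}

lemma exteriorPowerDerivation_lowerEnd_chainWedge (c : Fin j → ι × ℕ) :
    exteriorPowerDerivation j (lowerEnd b) (chainWedge b c) =
      ∑ l, chainWedge b (shiftOn {l} c) := by
  rw [chainWedge, exteriorPowerDerivation_apply_ιMulti]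
  refine sum_congr rfl fun l _ ↦ congrArg _ (funext fun k ↦ ?_)
  rcases eq_or_ne k l with rfl | hkl
  · simp [shiftOn, lowerEnd_chainVec]
  · simp [shiftOn, hkl]

lemma exteriorPowerDerivation_weightEnd_chainWedge (c : Fin j → ι × ℕ) :
    exteriorPowerDerivation j (weightEnd b) (chainWedge b c) =
      (wedgeWeight m c : R) • chainWedge b c := by
  simp only [chainWedge, exteriorPowerDerivation_apply_ιMulti, weightEnd_chainVec,
    AlternatingMap.map_update_smul, Function.update_eq_self, wedgeWeight, Int.cast_sum, sum_smul]

variable {M : End R V} {ξ : ι → R}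

lemma IsNormalizedJordanBasis.map_chainWedge (hb : IsNormalizedJordanBasis M ξ b)
    (c : Fin j → ι × ℕ) :
    exteriorPower.map j M (chainWedge b c) =
      (∏ l, ξ (c l).1) • ∑ S, chainWedge b (shiftOn S c) := by
  have hvec : (M ∘ fun l ↦ chainVec b (c l)) = fun l ↦
      ξ (c l).1 • (chainVec b ((c l).1, (c l).2 + 1) + chainVec b (c l)) := by
    ext l
    rw [Function.comp_apply, hb, add_comm]
  rw [chainWedge, map_apply_ιMulti, hvec, AlternatingMap.map_smul_univ]
  congr 1
  refine ((ιMulti R j).map_add_univ _ _).trans (sum_congr rfl fun S _ ↦ ?_)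
  refine congrArg _ (funext fun l ↦ ?_)
  by_cases hl : l ∈ S <;> simp [shiftOn, hl]

lemma IsNormalizedJordanBasis.map_sub_smul_derivation_chainWedge
    (hb : IsNormalizedJordanBasis M ξ b) (c : Fin j → ι × ℕ) {ζ : R} (hζ : ∏ l, ξ (c l).1 = ζ) :
    (exteriorPower.map j M - ζ • LinearMap.id - ζ • exteriorPowerDerivation j (lowerEnd b) :
        End R (⋀[R]^j V)) (chainWedge b c) =
      ζ • ∑ S with 2 ≤ #S, chainWedge b (shiftOn S c) := by
  simp only [LinearMap.sub_apply, LinearMap.smul_apply, LinearMap.id_apply, hb.map_chainWedge, hζ,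
    sum_finset_eq_add_sum_singleton_add fun S ↦ chainWedge b (shiftOn S c), shiftOn_empty,
    exteriorPowerDerivation_lowerEnd_chainWedge, smul_add]
  abel

end ChainWedges

section WeightFiltration

variable {R V ι : Type*} [CommRing R] [AddCommGroup V] [Module R V] {m : ι → ℕ} {j : ℕ}
  {b : Basis (Σ i, Fin (m i)) R V} {ξ : ι → R} {ζ : R}

/-- The span of the wedges of chain vectors that have generalized `⋀^j M`-eigenvalue `ζ` and
`sl₂`-weight at most `x`. -/
def weightFiltration (b : Basis (Σ i, Fin (m i)) R V) (ξ : ι → R) (j : ℕ) (ζ : R) (x : ℤ) :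
    Submodule R (⋀[R]^j V) :=
  Submodule.span R {w | ∃ c : Fin j → ι × ℕ,
    ∏ l, ξ (c l).1 = ζ ∧ wedgeWeight m c ≤ x ∧ chainWedge b c = w}

lemma chainWedge_mem_weightFiltration {c : Fin j → ι × ℕ} {x : ℤ} (hζ : ∏ l, ξ (c l).1 = ζ)
    (hx : wedgeWeight m c ≤ x) : chainWedge b c ∈ weightFiltration b ξ j ζ x :=
  Submodule.subset_span ⟨c, hζ, hx, rfl⟩

lemma weightFiltration_mono : Monotone (weightFiltration b ξ j ζ) := fun _ _ hxy ↦
  Submodule.span_mono fun _ ⟨c, hζ, hx, hw⟩ ↦ ⟨c, hζ, hx.trans hxy, hw⟩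

lemma weightFiltration_le_iff {x : ℤ} {U : Submodule R (⋀[R]^j V)} :
    weightFiltration b ξ j ζ x ≤ U ↔
      ∀ c : Fin j → ι × ℕ, ∏ l, ξ (c l).1 = ζ → wedgeWeight m c ≤ x → chainWedge b c ∈ U := by
  rw [weightFiltration, Submodule.span_le]
  exact ⟨fun h c hζ hx ↦ h ⟨c, hζ, hx, rfl⟩, by rintro h _ ⟨c, hζ, hx, rfl⟩; exact h c hζ hx⟩

lemma chainWedge_shiftOn_mem_weightFiltration {c : Fin j → ι × ℕ} {x y : ℤ}
    (hζ : ∏ l, ξ (c l).1 = ζ) (hx : wedgeWeight m c ≤ x) {S : Finset (Fin j)}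
    (hS : x - 2 * #S ≤ y) : chainWedge b (shiftOn S c) ∈ weightFiltration b ξ j ζ y :=
  chainWedge_mem_weightFiltration (by simpa only [shiftOn_fst] using hζ)
    (by rw [wedgeWeight_shiftOn]; lia)

lemma weightFiltration_le_comap_derivation (x : ℤ) :
    weightFiltration b ξ j ζ x ≤
      (weightFiltration b ξ j ζ (x - 2)).comap (exteriorPowerDerivation j (lowerEnd b)) := by
  refine weightFiltration_le_iff.2 fun c hζ hx ↦ ?_
  rw [Submodule.mem_comap, exteriorPowerDerivation_lowerEnd_chainWedge]
  exact sum_mem fun l _ ↦ chainWedge_shiftOn_mem_weightFiltration hζ hx (by simp)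

lemma IsNormalizedJordanBasis.weightFiltration_le_comap {M : End R V}
    (hb : IsNormalizedJordanBasis M ξ b) (x : ℤ) :
    weightFiltration b ξ j ζ x ≤ (weightFiltration b ξ j ζ (x - 2 - 2)).comap
      (exteriorPower.map j M - ζ • LinearMap.id - ζ • exteriorPowerDerivation j (lowerEnd b)) := by
  refine weightFiltration_le_iff.2 fun c hζ hx ↦ ?_
  rw [Submodule.mem_comap, hb.map_sub_smul_derivation_chainWedge c hζ]
  refine Submodule.smul_mem _ _ (sum_mem fun S hS ↦ ?_)
  have hcard : 2 ≤ #S := (mem_filter.1 hS).2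
  exact chainWedge_shiftOn_mem_weightFiltration hζ hx (by lia)

end WeightFiltration

section BlockSizes

lemma sum_range_weights (m n : ℕ) : ∑ a ∈ range n, ((m : ℤ) - 1 - 2 * a) = n * (m - n) := by
  induction n with
  | zero => simp
  | succ n ih =>
    rw [sum_range_succ, ih]
    push_cast
    ring

lemma abs_sum_weights_le {α : Type*} {S : Finset α} {f : α → ℕ} {m : ℕ} (hf : Set.InjOn f S)
    (hm : ∀ l ∈ S, f l < m) : |∑ l ∈ S, ((m : ℤ) - 1 - 2 * f l)| ≤ #S * (m - #S) := by
  have hinj : Set.InjOn (fun l ↦ (f l : ℤ)) S := Nat.cast_injective.comp_injOn hf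
  have hcard : #(S.image fun l ↦ (f l : ℤ)) = #S := card_image_of_injOn hinj
  have hlower : ∑ a ∈ range #S, (a : ℤ) ≤ ∑ l ∈ S, (f l : ℤ) := by
    rw [← sum_image hinj (f := fun x ↦ x), ← hcard]
    simpa using sum_range_le_sum (s := S.image fun l ↦ (f l : ℤ)) (c := 0) (by simp)
  have hupper : ∑ l ∈ S, (f l : ℤ) ≤ ∑ a ∈ range #S, ((m : ℤ) - 1 - a) := by
    rw [← sum_image hinj (f := fun x ↦ x), ← hcard]
    refine sum_le_sum_range (forall_mem_image.2 fun l hl ↦ ?_)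
    have := hm l hl
    lia
  have hrange := sum_range_weights m #S
  simp only [sum_sub_distrib, ← mul_sum, sum_const, card_range] at hrange hupper ⊢
  rw [abs_le]
  constructor <;> linarith

section Fibers

variable {ι : Type*} [DecidableEq ι] {j : ℕ} {m : ι → ℕ} {c : Fin j → ι × ℕ}

lemma injOn_snd_fiber (hc : Function.Injective c) (i : ι) :
    Set.InjOn (fun l ↦ (c l).2) ({l | (c l).1 = i} : Finset (Fin j)) := by
  intro l hl k hk hlk
  simp only [coe_filter_univ, Set.mem_ofPred_eq] at hl hk
  exact hc (Prod.ext (hl.trans hk.symm) hlk)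

lemma card_fiber_le (hc : Function.Injective c) (hcm : ∀ l, (c l).2 < m (c l).1) (i : ι) :
    #{l | (c l).1 = i} ≤ m i := by
  have hmaps : Set.MapsTo (fun l ↦ (c l).2) ({l | (c l).1 = i} : Finset (Fin j)) (range (m i)) :=
    fun l hl ↦ mem_coe.2 (mem_range.2 ((mem_filter.1 hl).2 ▸ hcm l))
  simpa using card_le_card_of_injOn _ hmaps (injOn_snd_fiber hc i)

lemma abs_wedgeWeight_le [Fintype ι] (hc : Function.Injective c)
    (hcm : ∀ l, (c l).2 < m (c l).1) :
    |wedgeWeight m c| ≤ ∑ i, (#{l | (c l).1 = i} : ℤ) * (m i - #{l | (c l).1 = i}) := by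
  have hfiber (i : ι) : ∑ l with (c l).1 = i, chainWeight m (c l) =
      ∑ l with (c l).1 = i, ((m i : ℤ) - 1 - 2 * (c l).2) :=
    sum_congr rfl fun l hl ↦ by rw [chainWeight, (mem_filter.1 hl).2]
  rw [wedgeWeight, ← sum_fiberwise univ fun l ↦ (c l).1]
  refine (abs_sum_le_sum_abs _ _).trans (sum_le_sum fun i _ ↦ ?_)
  rw [hfiber]
  exact abs_sum_weights_le (injOn_snd_fiber hc i) fun l hl ↦ (mem_filter.1 hl).2 ▸ hcm l

end Fibers

variable {R ι : Type*} [CommMonoid R] [Fintype ι]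

/-- The sizes `1 + ∑ sᵢ (mᵢ - sᵢ)` of the largest Jordan blocks of the summands
`⨂ᵢ ⋀^{sᵢ} Vᵢ` of `⋀^j V` on which `⋀^j M` has eigenvalue `ζ`. -/
def exteriorBlockSizes (j : ℕ) (m : ι → ℕ) (ξ : ι → R) (ζ : R) : Set ℕ :=
  {n | ∃ s : ι → ℕ, (∀ i, s i ≤ m i) ∧ ∑ i, s i = j ∧ ∏ i, ξ i ^ s i = ζ ∧
    n = 1 + ∑ i, s i * (m i - s i)}

variable {j : ℕ} {m : ι → ℕ} {ξ : ι → R} {ζ : R} {c : Fin j → ι × ℕ}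

lemma exteriorBlockSizes_bddAbove : BddAbove (exteriorBlockSizes j m ξ ζ) := by
  refine ⟨1 + ∑ i, m i * m i, ?_⟩
  rintro _ ⟨s, hs, -, -, rfl⟩
  gcongr with i
  · exact hs i
  · exact Nat.sub_le _ _

lemma mem_exteriorBlockSizes [DecidableEq ι] (hle : ∀ i, #{l | (c l).1 = i} ≤ m i) :
    1 + ∑ i, #{l | (c l).1 = i} * (m i - #{l | (c l).1 = i}) ∈
      exteriorBlockSizes j m ξ (∏ l, ξ (c l).1) := by
  refine ⟨_, hle, ?_, ?_, rfl⟩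
  · simpa using (card_eq_sum_card_fiberwise (s := univ) (t := univ) (f := fun l ↦ (c l).1)
      (by simp)).symm
  · rw [← prod_fiberwise univ fun l ↦ (c l).1]
    refine prod_congr rfl fun i _ ↦ (prod_eq_pow_card fun l hl ↦ ?_).symm
    rw [(mem_filter.1 hl).2]

lemma abs_wedgeWeight_lt_sSup (hc : Function.Injective c) (hcm : ∀ l, (c l).2 < m (c l).1)
    (hζ : ∏ l, ξ (c l).1 = ζ) : |wedgeWeight m c| < sSup (exteriorBlockSizes j m ξ ζ) := by
  classical
  have hle := card_fiber_le hc hcm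
  have hsup : 1 + ∑ i, #{l | (c l).1 = i} * (m i - #{l | (c l).1 = i}) ≤
      sSup (exteriorBlockSizes j m ξ ζ) :=
    le_csSup exteriorBlockSizes_bddAbove (hζ ▸ mem_exteriorBlockSizes hle)
  zify [hle] at hsup
  linarith [abs_wedgeWeight_le hc hcm]

end BlockSizes

section UpperBound

variable {R V ι : Type*} [CommRing R] [AddCommGroup V] [Module R V] [Fintype ι] {m : ι → ℕ} {j : ℕ}
  {b : Basis (Σ i, Fin (m i)) R V} {ξ : ι → R} {ζ : R} {M : End R V}

lemma abs_wedgeWeight_lt_of_chainWedge_ne_zero {c : Fin j → ι × ℕ} (hc : chainWedge b c ≠ 0)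
    (hζ : ∏ l, ξ (c l).1 = ζ) : |wedgeWeight m c| < sSup (exteriorBlockSizes j m ξ ζ) := by
  refine abs_wedgeWeight_lt_sSup (fun l k hlk ↦ ?_) (fun l ↦ ?_) hζ
  · by_contra hne
    exact hc ((ιMulti R j).map_eq_zero_of_eq _ (congrArg (chainVec b) hlk) hne)
  · by_contra! hle
    exact hc ((ιMulti R j).map_coord_zero l (chainVec_of_le b hle))

lemma weightFiltration_eq_bot {x : ℤ} (hx : x ≤ -sSup (exteriorBlockSizes j m ξ ζ)) :
    weightFiltration b ξ j ζ x = ⊥ := by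
  refine le_bot_iff.1 (weightFiltration_le_iff.2 fun c hζ hcx ↦ ?_)
  by_contra hne
  have hlt := abs_wedgeWeight_lt_of_chainWedge_ne_zero hne hζ
  linarith [neg_abs_le (wedgeWeight m c)]

lemma chainWedge_mem_weightFiltration_sSup (b : Basis (Σ i, Fin (m i)) R V) (ξ : ι → R)
    (c : Fin j → ι × ℕ) : chainWedge b c ∈ weightFiltration b ξ j (∏ l, ξ (c l).1)
      (sSup (exteriorBlockSizes j m ξ (∏ l, ξ (c l).1)) - 1) := by
  rcases eq_or_ne (chainWedge b c) 0 with hzero | hne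
  · rw [hzero]
    exact zero_mem _
  · have hlt := abs_wedgeWeight_lt_of_chainWedge_ne_zero hne (ξ := ξ) rfl
    exact chainWedge_mem_weightFiltration rfl (by linarith [le_abs_self (wedgeWeight m c)])

lemma iSup_weightFiltration_eq_top (b : Basis (Σ i, Fin (m i)) R V) (ξ : ι → R) (j : ℕ) :
    ⨆ ζ, weightFiltration b ξ j ζ (sSup (exteriorBlockSizes j m ξ ζ) - 1) = ⊤ := by
  have hspan : Submodule.span R (Set.range (chainVec b)) = ⊤ := by
    rw [eq_top_iff, ← b.span_eq]
    exact Submodule.span_mono (Set.range_subset_iff.2 fun p ↦ ⟨_, chainVec_coe_fin b p⟩)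
  rw [eq_top_iff, ← ιMulti_span_of_span R j V hspan, Submodule.span_le]
  rintro _ ⟨w, hw, rfl⟩
  choose c hc using Set.range_subset_iff.1 hw
  obtain rfl : (fun l ↦ chainVec b (c l)) = w := funext hc
  exact Submodule.mem_iSup_of_mem _ (chainWedge_mem_weightFiltration_sSup b ξ c)

lemma IsNormalizedJordanBasis.weightFiltration_le_ker_pow (hb : IsNormalizedJordanBasis M ξ b)
    (ζ : R) : weightFiltration b ξ j ζ (sSup (exteriorBlockSizes j m ξ ζ) - 1) ≤
      LinearMap.ker ((exteriorPower.map j M - ζ • LinearMap.id : End R (⋀[R]^j V)) ^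
        sSup (exteriorBlockSizes j m ξ ζ)) := by
  have hlower := filtration_le_comap_of_leading_term weightFiltration_mono zero_le_two
    weightFiltration_le_comap_derivation (hb.weightFiltration_le_comap (j := j) (ζ := ζ))
  refine (filtration_le_comap_pow hlower _ (sSup (exteriorBlockSizes j m ξ ζ))).trans_eq ?_
  rw [weightFiltration_eq_bot (by lia), Submodule.comap_bot]

end UpperBound

lemma IsNormalizedJordanBasis.ker_pow_le_ker_pow_sSup {K V ι : Type*} [Field K] [AddCommGroup V]
    [Module K V] [Fintype ι] {m : ι → ℕ} {b : Basis (Σ i, Fin (m i)) K V} {ξ : ι → K}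
    {M : End K V} (hb : IsNormalizedJordanBasis M ξ b) (j : ℕ) (ζ : K) (k : ℕ) :
    LinearMap.ker ((exteriorPower.map j M - ζ • LinearMap.id : End K (⋀[K]^j V)) ^ k) ≤
      LinearMap.ker ((exteriorPower.map j M - ζ • LinearMap.id : End K (⋀[K]^j V)) ^
        sSup (exteriorBlockSizes j m ξ ζ)) := by
  have hle (μ : K) : weightFiltration b ξ j μ (sSup (exteriorBlockSizes j m ξ μ) - 1) ≤
      End.maxGenEigenspace (exteriorPower.map j M) μ := fun z hz ↦
    (End.mem_maxGenEigenspace _ _ _).2 ⟨_, hb.weightFiltration_le_ker_pow μ hz⟩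
  have heq : (fun μ ↦ weightFiltration b ξ j μ (sSup (exteriorBlockSizes j m ξ μ) - 1)) =
      End.maxGenEigenspace (exteriorPower.map j M) :=
    ((End.independent_maxGenEigenspace _).le_iff_eq_of_iSup_eq_top
      (iSup_weightFiltration_eq_top b ξ j)).1 hle
  refine le_trans (fun z hz ↦ ?_) (hb.weightFiltration_le_ker_pow ζ)
  rw [congrFun heq ζ]
  exact (End.mem_maxGenEigenspace _ _ _).2 ⟨k, hz⟩

section HighestWeightVector

variable {ι : Type*} {m s : ι → ℕ} {j : ℕ}

/-- Positions filling exactly the first `s i` places of each chain `i`. The corresponding wedge is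
the highest weight vector of `⨂ᵢ ⋀^{sᵢ} Vᵢ`. -/
def topPositions (σ : Fin j ≃ Σ i, Fin (s i)) (l : Fin j) : ι × ℕ := ((σ l).1, (σ l).2)

variable (σ : Fin j ≃ Σ i, Fin (s i))

lemma topPositions_symm (p : Σ i, Fin (s i)) : topPositions σ (σ.symm p) = (p.1, (p.2 : ℕ)) := by
  rw [topPositions, σ.apply_symm_apply]

lemma prod_topPositions [Fintype ι] {R : Type*} [CommMonoid R] (ξ : ι → R) :
    ∏ l, ξ (topPositions σ l).1 = ∏ i, ξ i ^ s i := by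
  rw [← σ.symm.prod_comp]
  simp [topPositions_symm, Fintype.prod_sigma]

lemma wedgeWeight_topPositions [Fintype ι] (hs : ∀ i, s i ≤ m i) :
    wedgeWeight m (topPositions σ) = (∑ i, s i * (m i - s i) : ℕ) := by
  have hchain (i : ι) : ∑ a : Fin (s i), chainWeight m (i, a) = s i * (m i - s i) :=
    (Fin.sum_univ_eq_sum_range (fun a ↦ chainWeight m (i, a)) _).trans
      (sum_range_weights (m i) (s i))
  rw [wedgeWeight, ← σ.symm.sum_comp]
  simp [topPositions_symm, Fintype.sum_sigma, hchain, Nat.cast_sub (hs _)]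

lemma derivation_raiseEnd_topPositions {R V : Type*} [CommRing R] [AddCommGroup V] [Module R V]
    (b : Basis (Σ i, Fin (m i)) R V) :
    exteriorPowerDerivation j (raiseEnd b) (chainWedge b (topPositions σ)) = 0 := by
  rw [chainWedge, exteriorPowerDerivation_apply_ιMulti]
  refine sum_eq_zero fun l _ ↦ ?_
  obtain ⟨⟨i, a, ha⟩, rfl⟩ := σ.symm.surjective l
  rw [raiseEnd_chainVec, AlternatingMap.map_update_smul, topPositions_symm]
  rcases a with _ | a
  · simp
  · -- Raising produces the preceding vector of the same chain, which is already a factor.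
    let k := σ.symm ⟨i, a, by lia⟩
    have hne : σ.symm ⟨i, a + 1, ha⟩ ≠ k := by simp [k]
    rw [(ιMulti R j).map_eq_zero_of_eq _ _ hne, smul_zero]
    simp [hne.symm, k, topPositions_symm]

variable {K V : Type*} [Field K] [AddCommGroup V] [Module K V]

lemma ιMulti_ne_zero_of_linearIndependent {v : Fin j → V} (hv : LinearIndependent K v) :
    ιMulti K j v ≠ 0 := by
  simpa [ιMulti_family] using (ιMulti_family_linearIndependent_field j hv).ne_zero
    (Set.powersetCard.ofFinEmbEquiv (RelEmbedding.refl _))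

lemma chainWedge_topPositions_ne_zero (b : Basis (Σ i, Fin (m i)) K V) (hs : ∀ i, s i ≤ m i) :
    chainWedge b (topPositions σ) ≠ 0 := by
  let f : Fin j → Σ i, Fin (m i) := Sigma.map id (fun i ↦ Fin.castLE (hs i)) ∘ σ
  have hf : Function.Injective f :=
    (Function.injective_id.sigma_map fun i ↦ Fin.castLE_injective (hs i)).comp σ.injective
  have hvec : (fun l ↦ chainVec b (topPositions σ l)) = b ∘ f :=
    funext fun l ↦ chainVec_coe_fin b (f l)
  rw [chainWedge, hvec]
  exact ιMulti_ne_zero_of_linearIndependent (b.linearIndependent.comp f hf)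

lemma derivation_lowerEnd_pow_topPositions_ne_zero [CharZero K] [Fintype ι]
    (b : Basis (Σ i, Fin (m i)) K V) (hs : ∀ i, s i ≤ m i) :
    (exteriorPowerDerivation j (lowerEnd b) ^ (∑ i, s i * (m i - s i)))
      (chainWedge b (topPositions σ)) ≠ 0 := by
  let δ : End K V →ₗ⁅K⁆ End K (⋀[K]^j V) := exteriorPowerDerivation j
  have hweight : δ (weightEnd b) (chainWedge b (topPositions σ)) =
      ((∑ i, s i * (m i - s i) : ℕ) : K) • chainWedge b (topPositions σ) := by
    rw [exteriorPowerDerivation_weightEnd_chainWedge, wedgeWeight_topPositions σ hs,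
      Int.cast_natCast]
  exact pow_apply_ne_zero_of_sl2_relations (e := δ (raiseEnd b)) (h := δ (weightEnd b))
    (by rw [← δ.map_lie, lie_raiseEnd_lowerEnd])
    (by rw [← δ.map_lie, lie_weightEnd_raiseEnd, map_nsmul])
    (by rw [← δ.map_lie, lie_weightEnd_lowerEnd, map_neg, map_nsmul])
    (chainWedge_topPositions_ne_zero σ b hs) (derivation_raiseEnd_topPositions σ b) hweight

end HighestWeightVector

end ExteriorSl2

section Main

variable {K V ι : Type*} [Field K] [CharZero K] [AddCommGroup V] [Module K V] [Fintype ι]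
  {m : ι → ℕ} {ξ : ι → K} {M : End K V} {b : Basis (Σ i, Fin (m i)) K V}

lemma IsNormalizedJordanBasis.ker_pow_sSup_ne (hb : IsNormalizedJordanBasis M ξ b)
    (hξ : ∀ i, ξ i ≠ 0) {j k : ℕ} {ζ : K} (hk : sSup (exteriorBlockSizes j m ξ ζ) = k + 1) :
    LinearMap.ker ((exteriorPower.map j M - ζ • LinearMap.id : End K (⋀[K]^j V)) ^
        sSup (exteriorBlockSizes j m ξ ζ)) ≠
      LinearMap.ker ((exteriorPower.map j M - ζ • LinearMap.id : End K (⋀[K]^j V)) ^ k) := by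
  have hne : (exteriorBlockSizes j m ξ ζ).Nonempty := by
    by_contra! hempty
    simp [hempty] at hk
  obtain ⟨s, hs, hsj, hsζ, hsup⟩ := Nat.sSup_mem hne exteriorBlockSizes_bddAbove
  obtain rfl : k = ∑ i, s i * (m i - s i) := by lia
  let σ : Fin j ≃ Σ i, Fin (s i) := Fintype.equivOfCardEq (by simp [hsj])
  have hprod : ∏ l, ξ (topPositions σ l).1 = ζ := (prod_topPositions σ ξ).trans hsζ
  have hmem := chainWedge_mem_weightFiltration (b := b) hprod (wedgeWeight_topPositions σ hs).le
  have hlead := filtration_le_comap_pow_sub_smul_pow weightFiltration_mono zero_le_two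
    weightFiltration_le_comap_derivation hb.weightFiltration_le_comap _ (∑ i, s i * (m i - s i))
    hmem
  rw [weightFiltration_eq_bot (by lia), Submodule.comap_bot, LinearMap.mem_ker,
    LinearMap.sub_apply, sub_eq_zero, LinearMap.smul_apply] at hlead
  have hζ : ζ ≠ 0 := hprod ▸ prod_ne_zero_iff.2 fun l _ ↦ hξ _
  intro hker
  have hzero := hker.le (hb.weightFiltration_le_ker_pow ζ (by simpa [hk] using hmem))
  rw [LinearMap.mem_ker, hlead] at hzero
  exact smul_ne_zero (pow_ne_zero _ hζ) (derivation_lowerEnd_pow_topPositions_ne_zero σ b hs) hzero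

theorem maximal_jordan_block_exteriorPower_general [DecidableEq ι] {U : ι → Submodule K V}
    (hdec : DirectSum.IsInternal U) (hξ : ∀ i, ξ i ≠ 0) (hdim : ∀ i, finrank K (U i) = m i)
    (hstab : ∀ i, ∀ x ∈ U i, M x ∈ U i)
    (hnil : ∀ i, ∀ x ∈ U i, ((M - ξ i • LinearMap.id : End K V) ^ m i) x = 0)
    (hnil' : ∀ i, ∃ x ∈ U i, ((M - ξ i • LinearMap.id : End K V) ^ (m i - 1)) x ≠ 0)
    (j : ℕ) (ζ : K) :
    IsLeast {k | LinearMap.ker ((exteriorPower.map j M - ζ • LinearMap.id) ^ (k + 1)) =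
        LinearMap.ker ((exteriorPower.map j M - ζ • LinearMap.id) ^ k)}
      (sSup (exteriorBlockSizes j m ξ ζ)) := by
  obtain ⟨b, hb⟩ := exists_isNormalizedJordanBasis hdec hξ hdim hstab hnil hnil'
  exact isLeast_ker_pow_succ_eq (hb.ker_pow_le_ker_pow_sSup j ζ) fun _ ↦ hb.ker_pow_sSup_ne hξ

end Main

/-- Let `F` be an algebraically closed field of characteristic zero, `V ≠ 0` a finite
dimensional `F`-vector space, and `M` an automorphism of `V`. Suppose `V = V₁ ⊕ ⋯ ⊕ V_q`
with each `V_i` stable under `M` and the restriction of `M` to `V_i` a single Jordan block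
of size `m_i = dim V_i` with eigenvalue `ξ_i ∈ Fˣ`. Fix `j > 0` and let `∧^j M` be the
induced endomorphism `Mj` of `⋀^j V`. For `ζ ∈ F`, the maximal rank `max_ζ` of a Jordan
block of `∧^j M` with eigenvalue `ζ` (the smallest `k` with
`ker ((∧^j M - ζ·id) ^ (k+1)) = ker ((∧^j M - ζ·id) ^ k)`) equals
`max {1 + Σ_i s_i (m_i - s_i) | s ∈ ℕ^q, Σ s_i = j, s_i ≤ m_i, Π ξ_i ^ s_i = ζ}`,
with the convention `max ∅ = 0`. -/
theorem maximal_jordan_block_exteriorPower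
    (F V : Type*) [Field F] [IsAlgClosed F] [CharZero F]
    [AddCommGroup V] [Module F V] [FiniteDimensional F V] [Nontrivial V]
    (M : V →ₗ[F] V) (hMbij : Function.Bijective M)
    (q : ℕ) (Vsub : Fin q → Submodule F V) (hdec : DirectSum.IsInternal Vsub)
    (m : Fin q → ℕ) (ξ : Fin q → F) (hξ : ∀ i, ξ i ≠ 0)
    (hdim : ∀ i, Module.finrank F (Vsub i) = m i)
    (hstab : ∀ i, ∀ x ∈ Vsub i, M x ∈ Vsub i)
    (hjb : ∀ i, ∀ x ∈ Vsub i, (((M - ξ i • LinearMap.id : V →ₗ[F] V)) ^ m i) x = 0)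
    (hjb' : ∀ i, ∃ x ∈ Vsub i, (((M - ξ i • LinearMap.id : V →ₗ[F] V)) ^ (m i - 1)) x ≠ 0)
    (j : ℕ) (hj : 0 < j)
    (Mj : ⋀[F]^j V →ₗ[F] ⋀[F]^j V)
    (hMj : ∀ v : Fin j → V, Mj (wedge F j v) = wedge F j fun k => M (v k))
    (ζ : F) (maxζ : ℕ)
    (hmax : IsLeast {k : ℕ |
      LinearMap.ker ((Mj - ζ • LinearMap.id) ^ (k + 1)) =
        LinearMap.ker ((Mj - ζ • LinearMap.id) ^ k)} maxζ) :
    maxζ = sSup {n : ℕ | ∃ s : Fin q → ℕ, (∀ i, s i ≤ m i) ∧ (∑ i, s i) = j ∧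
      (∏ i, ξ i ^ s i) = ζ ∧ n = 1 + ∑ i, s i * (m i - s i)} := by
  obtain rfl : Mj = exteriorPower.map j M :=
    linearMap_ext (AlternatingMap.ext fun v ↦ (hMj v).trans (map_apply_ιMulti M v).symm)
  exact hmax.unique
    (maximal_jordan_block_exteriorPower_general hdec hξ hdim hstab hjb hjb' j ζ)
end
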